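/- arXiv:2201.05582 — 2 statements merged into one kernel-verified Lean document; each statement's English description precedes it below -/
import Mathlib

section
/- Let μ_α and μ_β satisfy Assumption 2. Then there exist constants C_α > 0 and C_β > 0 such that dist(ω_α(z), supp(μ_β)) ≥ C_α and dist(ω_β(z), supp(μ_α)) ≥ C_β for every z ∈ 𝓙. -/
open MeasureTheory Topology Filter Set

noncomputable section

/-- The open upper half-plane ℂ⁺. -/
def UHP : Set ℂ := {z : ℂ | 0 < z.im}

/-- The closed upper half-plane ℂ⁺ ∪ ℝ. -/
def CUHP : Set ℂ := {z : ℂ | 0 ≤ z.im}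

/-- Cauchy–Stieltjes transform `m_μ(z) = ∫ 1/(x−z) dμ(x)`. -/
def stT (μ : Measure ℝ) (z : ℂ) : ℂ := ∫ x, ((x : ℂ) - z)⁻¹ ∂μ

/-- Real-valued Cauchy–Stieltjes transform at real points (outside the support). -/
def stTR (μ : Measure ℝ) (E : ℝ) : ℝ := ∫ x, (x - E)⁻¹ ∂μ

/-- Negative reciprocal Cauchy–Stieltjes transform `F_μ = −1/m_μ`. -/
def nrT (μ : Measure ℝ) (z : ℂ) : ℂ := -(stT μ z)⁻¹

/-- Support of a Borel measure on ℝ (the smallest closed set of full measure). -/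
def msupp (μ : Measure ℝ) : Set ℝ := {x : ℝ | ∀ ε > 0, 0 < μ (Set.Ioo (x - ε) (x + ε))}

/-- Absolutely continuous part of μ with respect to Lebesgue measure. -/
def acPart (μ : Measure ℝ) : Measure ℝ := volume.withDensity (μ.rnDeriv volume)

/-- `I_μ(ω) = ∫ 1/|x−ω|² dμ(x)`. -/
def Ifun (μ : Measure ℝ) (w : ℂ) : ℝ := ∫ x, (Complex.normSq ((x : ℂ) - w))⁻¹ ∂μ

/-- A sequence of the upper half-plane converging non-tangentially to `E ∈ ℝ`. -/
def NonTangentialSeq (z : ℕ → ℂ) (E : ℝ) : Prop :=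
  (∀ n, z n ∈ UHP) ∧ Tendsto z atTop (𝓝 (E : ℂ)) ∧
    ∃ C : ℝ, ∀ n, |(z n).re - E| ≤ C * (z n).im

/-- The density `ρ_μ` of the a.c. part of `μ` vanishes at `x`
(via the Stieltjes inversion formula). -/
def densityVanishesAt (μ : Measure ℝ) (x : ℝ) : Prop :=
  Tendsto (fun η : ℝ => (stT μ ((x : ℂ) + (η : ℂ) * Complex.I)).im) (𝓝[>] 0) (𝓝 0)

/-- The density `ρ_μ` of the a.c. part of `μ` diverges at `x`. -/
def densityDivergesAt (μ : Measure ℝ) (x : ℝ) : Prop :=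
  Tendsto (fun η : ℝ => (stT μ ((x : ℂ) + (η : ℂ) * Complex.I)).im) (𝓝[>] 0) atTop

/-- Assumption 1. -/
structure Assumption1 (μ : Measure ℝ) (nac npp nppout : ℕ)
    (Em Ep : Fin nac → ℝ) (atom : Fin npp → ℝ) (ρ : ℝ → ℝ) : Prop where
  prob : IsProbabilityMeasure μ
  compact : IsCompact (msupp μ)
  nac_pos : 1 ≤ nac
  npp_pos : 1 ≤ npp
  ρ_nonneg : ∀ x, 0 ≤ ρ x
  ac_density : acPart μ = volume.withDensity fun x => ENNReal.ofReal (ρ x)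
  sing_atomic : μ.singularPart volume = ∑ j : Fin npp, μ {atom j} • Measure.dirac (atom j)
  atom_inj : Function.Injective atom
  atom_pos : ∀ j, 0 < μ {atom j}
  lt : ∀ j, Em j < Ep j
  ordered : ∀ i j : Fin nac, i < j → Ep i < Em j
  supp_ac : msupp (acPart μ) = ⋃ j, Set.Icc (Em j) (Ep j)
  out_card : Nat.card {j : Fin npp // atom j ∉ msupp (acPart μ)} = nppout
  no_atom_endpoint : ∀ j i, atom j ≠ Em i ∧ atom j ≠ Ep i
  power_law : ∀ j, ∃ tm tp C : ℝ, -1 < tm ∧ tm < 1 ∧ -1 < tp ∧ tp < 1 ∧ 1 ≤ C ∧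
    ∀ᵐ x ∂volume, x ∈ Set.Icc (Em j) (Ep j) →
      C⁻¹ < ρ x / ((x - Em j) ^ tm * (Ep j - x) ^ tp) ∧
      ρ x / ((x - Em j) ^ tm * (Ep j - x) ^ tp) < C

/-- The subordination function `ω_t` for the free convolution semi-group,
together with its continuous extension to `ℂ⁺ ∪ ℝ`. -/
structure IsSubordT (μ : Measure ℝ) (t : ℝ) (ω : ℂ → ℂ) : Prop where
  diff : DifferentiableOn ℂ ω UHP
  maps : ∀ z ∈ UHP, ω z ∈ UHP
  imLe : ∀ z ∈ UHP, z.im ≤ (ω z).im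
  limTop : Tendsto (fun η : ℝ => ω ((η : ℂ) * Complex.I) / ((η : ℂ) * Complex.I))
      atTop (𝓝 1)
  eqn : ∀ z ∈ UHP, (t : ℂ) * ω z - z = ((t : ℂ) - 1) * nrT μ (ω z)
  cont : ContinuousOn ω CUHP

/-- `μt = μ^{⊞ t}`: the probability measure whose negative reciprocal Cauchy–Stieltjes
transform is `F_μ ∘ ω_t`, i.e. whose Cauchy–Stieltjes transform is `m_μ ∘ ω_t`. -/
def IsFreePow (μ : Measure ℝ) (ω : ℂ → ℂ) (μt : Measure ℝ) : Prop :=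
  IsProbabilityMeasure μt ∧ ∀ z ∈ UHP, stT μt z = stT μ (ω z)

/-- Assumption 2 (for one of the two measures). -/
structure Assumption2 (μ : Measure ℝ) (n : ℕ) (Am Ap : Fin n → ℝ) (ρ : ℝ → ℝ) : Prop where
  prob : IsProbabilityMeasure μ
  n_pos : 1 ≤ n
  centered : ∫ x, x ∂μ = 0
  ρ_nonneg : ∀ x, 0 ≤ ρ x
  ac : μ = volume.withDensity fun x => ENNReal.ofReal (ρ x)
  lt : ∀ j, Am j < Ap j
  ordered : ∀ i j : Fin n, i < j → Ap i < Am j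
  supp_eq : msupp μ = ⋃ j, Set.Icc (Am j) (Ap j)
  power_law : ∀ j, ∃ sm sp C : ℝ, -1 < sm ∧ sm < 1 ∧ -1 < sp ∧ sp < 1 ∧ 1 ≤ C ∧
    ∀ᵐ x ∂volume, x ∈ Set.Icc (Am j) (Ap j) →
      C⁻¹ < ρ x / ((x - Am j) ^ sm * (Ap j - x) ^ sp) ∧
      ρ x / ((x - Am j) ^ sm * (Ap j - x) ^ sp) < C

/-- The pair of subordination functions for the free additive convolution `μa ⊞ μb`. -/
structure IsSubordPair (μa μb : Measure ℝ) (ωa ωb : ℂ → ℂ) : Prop where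
  diff_a : DifferentiableOn ℂ ωa UHP
  diff_b : DifferentiableOn ℂ ωb UHP
  maps_a : ∀ z ∈ UHP, ωa z ∈ UHP
  maps_b : ∀ z ∈ UHP, ωb z ∈ UHP
  imLe_a : ∀ z ∈ UHP, z.im ≤ (ωa z).im
  imLe_b : ∀ z ∈ UHP, z.im ≤ (ωb z).im
  lim_a : Tendsto (fun η : ℝ => ωa ((η : ℂ) * Complex.I) / ((η : ℂ) * Complex.I))
      atTop (𝓝 1)
  lim_b : Tendsto (fun η : ℝ => ωb ((η : ℂ) * Complex.I) / ((η : ℂ) * Complex.I))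
      atTop (𝓝 1)
  eqn_a : ∀ z ∈ UHP, ωa z + ωb z - z = nrT μa (ωb z)
  eqn_b : ∀ z ∈ UHP, ωa z + ωb z - z = nrT μb (ωa z)

/-- `μab = μa ⊞ μb`: the probability measure whose negative reciprocal Cauchy–Stieltjes
transform is `F_{μa} ∘ ω_b`, i.e. whose Cauchy–Stieltjes transform is `m_{μa} ∘ ω_b`. -/
def IsFreeConv (μa μb : Measure ℝ) (ωb : ℂ → ℂ) (μab : Measure ℝ) : Prop :=
  IsProbabilityMeasure μab ∧ ∀ z ∈ UHP, stT μab z = stT μa (ωb z)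

/-- `Ω` is the continuous extension of `ω` to `ℂ⁺ ∪ ℝ`, with values in the
Riemann sphere `ℂ ∪ {∞}`. -/
def ExtendsToRP (ω : ℂ → ℂ) (Ω : ℂ → OnePoint ℂ) : Prop :=
  ContinuousOn Ω CUHP ∧ ∀ z ∈ UHP, Ω z = (ω z : OnePoint ℂ)

/-- `μhat` is the measure in the Nevanlinna representation
`F_μ(ω) − ω = −∫ x dμ + ∫ 1/(x−ω) dμ̂(x)`. -/
def IsNevanHat (μ μhat : Measure ℝ) : Prop :=
  IsFiniteMeasure μhat ∧ ∀ z ∈ UHP,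
    nrT μ z - z = -((∫ x, x ∂μ : ℝ) : ℂ) + ∫ x, ((x : ℂ) - z)⁻¹ ∂μhat

end

section Helpers

lemma sub_ne {w : ℂ} (hw : 0 < w.im) (x : ℝ) : (x : ℂ) - w ≠ 0 := by
  intro h
  have := congrArg Complex.im h
  simp at this
  linarith

lemma stT_integrable (μ : Measure ℝ) [IsProbabilityMeasure μ] {w : ℂ} (hw : 0 < w.im) :
    Integrable (fun x : ℝ => ((x : ℂ) - w)⁻¹) μ := by
  have hc : Continuous (fun x : ℝ => ((x : ℂ) - w)⁻¹) :=
    Continuous.inv₀ (by fun_prop) (sub_ne hw)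
  refine Integrable.of_bound hc.aestronglyMeasurable (w.im)⁻¹ (ae_of_all _ fun x => ?_)
  rw [norm_inv]
  apply inv_anti₀ hw
  have := Complex.abs_im_le_norm ((x : ℂ) - w)
  simp only [Complex.sub_im, Complex.ofReal_im, zero_sub, abs_neg] at this
  exact (le_abs_self _).trans this

lemma I_integrable (μ : Measure ℝ) [IsProbabilityMeasure μ] {w : ℂ} (hw : 0 < w.im) :
    Integrable (fun x : ℝ => (Complex.normSq ((x : ℂ) - w))⁻¹) μ := by
  have hc : Continuous (fun x : ℝ => (Complex.normSq ((x : ℂ) - w))⁻¹) :=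
    Continuous.inv₀ (Complex.continuous_normSq.comp (by fun_prop))
      (fun x => by simpa using sub_ne hw x)
  refine Integrable.of_bound hc.aestronglyMeasurable (w.im ^ 2)⁻¹ (ae_of_all _ fun x => ?_)
  rw [norm_inv, Real.norm_of_nonneg (Complex.normSq_nonneg _)]
  apply inv_anti₀ (by positivity)
  simp only [Complex.normSq_apply, Complex.sub_im, Complex.ofReal_im, zero_sub, Complex.sub_re]
  nlinarith [mul_self_nonneg ((x : ℂ).re - w.re)]

lemma stT_im (μ : Measure ℝ) [IsProbabilityMeasure μ] {w : ℂ} (hw : 0 < w.im) :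
    (stT μ w).im = w.im * Ifun μ w := by
  unfold stT Ifun
  have h := (integral_im (𝕜 := ℂ) (stT_integrable μ hw))
  simp only [RCLike.im_eq_complex_im] at h
  rw [← h, ← integral_const_mul]
  congr 1
  ext x
  simp [Complex.inv_im, div_eq_mul_inv]

lemma I_pos (μ : Measure ℝ) [IsProbabilityMeasure μ] {w : ℂ} (hw : 0 < w.im) :
    0 < Ifun μ w := by
  unfold Ifun
  rw [integral_pos_iff_support_of_nonneg (fun x => by
    simp only [Pi.zero_apply]; exact inv_nonneg.2 (Complex.normSq_nonneg _)) (I_integrable μ hw)]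
  have : Function.support (fun x : ℝ => (Complex.normSq ((x : ℂ) - w))⁻¹) = Set.univ := by
    ext x
    simpa using sub_ne hw x
  rw [this]
  simp

lemma stT_ne (μ : Measure ℝ) [IsProbabilityMeasure μ] {w : ℂ} (hw : 0 < w.im) :
    stT μ w ≠ 0 := by
  intro h
  have h1 := stT_im μ hw
  rw [h] at h1
  have := mul_pos hw (I_pos μ hw)
  simp at h1
  rcases h1 with h1 | h1 <;> [linarith; linarith [I_pos μ hw]]

lemma nrT_im (μ : Measure ℝ) [IsProbabilityMeasure μ] {w : ℂ} (hw : 0 < w.im) :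
    (nrT μ w).im * Complex.normSq (stT μ w) = w.im * Ifun μ w := by
  have h0 : Complex.normSq (stT μ w) ≠ 0 := by simpa using stT_ne μ hw
  rw [← stT_im μ hw]
  unfold nrT
  rw [Complex.neg_im, Complex.inv_im]
  field_simp

/-- variance identity -/
lemma var_id (μ : Measure ℝ) [IsProbabilityMeasure μ] {w : ℂ} (hw : 0 < w.im) :
    Integrable (fun x : ℝ => Complex.normSq (((x : ℂ) - w)⁻¹ - stT μ w)) μ ∧
    ∫ x, Complex.normSq (((x : ℂ) - w)⁻¹ - stT μ w) ∂μ =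
      Ifun μ w - Complex.normSq (stT μ w) := by
  set m := stT μ w with hm
  have e : (fun x : ℝ => Complex.normSq (((x : ℂ) - w)⁻¹ - m)) = fun x : ℝ =>
      ((Complex.normSq ((x : ℂ) - w))⁻¹ + Complex.normSq m)
        - 2 * (((x : ℂ) - w)⁻¹ * (starRingEnd ℂ) m).re := by
    ext x
    rw [Complex.normSq_sub, Complex.normSq_inv]
  have i1 := I_integrable μ hw
  have i2 : Integrable (fun x : ℝ => ((x : ℂ) - w)⁻¹ * (starRingEnd ℂ) m) μ :=
    (stT_integrable μ hw).mul_const _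
  have i3 : Integrable (fun x : ℝ => 2 * (((x : ℂ) - w)⁻¹ * (starRingEnd ℂ) m).re) μ :=
    (i2.re).const_mul 2
  have i4 : Integrable (fun x : ℝ => (Complex.normSq ((x : ℂ) - w))⁻¹ + Complex.normSq m) μ :=
    i1.add (integrable_const _)
  have h2 : ∫ x : ℝ, (((x : ℂ) - w)⁻¹ * (starRingEnd ℂ) m).re ∂μ = Complex.normSq m := by
    have h := integral_re (𝕜 := ℂ) i2
    simp only [RCLike.re_eq_complex_re] at h
    rw [h, integral_mul_const]
    change (m * _).re = _
    rw [Complex.mul_conj, Complex.ofReal_re]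
  rw [e]
  refine ⟨i4.sub i3, ?_⟩
  rw [integral_sub i4 i3, integral_add i1 (integrable_const _), integral_const_mul, h2]
  simp [Ifun]
  ring

/-- Lemma B. -/
lemma lower_hat (μ : Measure ℝ) [IsProbabilityMeasure μ] {p q : ℝ} (hpq : p < q)
    (hp : p ∈ msupp μ) (hq : q ∈ msupp μ) :
    ∃ c M : ℝ, 0 < c ∧ 0 < M ∧ ∀ w : ℂ, 0 < w.im →
      Complex.normSq (stT μ w) * (c / (M + ‖w‖) ^ 2) ≤
        Ifun μ w - Complex.normSq (stT μ w) := by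
  set δ := (q - p) / 4 with hδ
  have hδ0 : 0 < δ := by rw [hδ]; linarith
  set S := Set.Ioo (p - δ) (p + δ)
  set T := Set.Ioo (q - δ) (q + δ)
  have hS : 0 < μ.real S := by
    rw [measureReal_def]; exact ENNReal.toReal_pos (hp δ hδ0).ne' (measure_ne_top _ _)
  have hT : 0 < μ.real T := by
    rw [measureReal_def]; exact ENNReal.toReal_pos (hq δ hδ0).ne' (measure_ne_top _ _)
  set P := min (μ.real S) (μ.real T)
  have hP : 0 < P := lt_min hS hT
  set M := |p| + |q| + δ
  have hM : 0 < M := by positivity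
  refine ⟨P * δ ^ 2, M, by positivity, hM, fun w hw => ?_⟩
  obtain ⟨vi, ve⟩ := var_id μ hw
  rw [← ve]
  set m := stT μ w with hm
  have hm0 : m ≠ 0 := stT_ne μ hw
  set u := m⁻¹ + w with hu
  have key : ∀ U : Set ℝ, MeasurableSet U → P ≤ μ.real U →
      (∀ x ∈ U, |x| ≤ M) → (∀ x ∈ U, δ ≤ |x - u.re|) →
      Complex.normSq m * (P * δ ^ 2 / (M + ‖w‖) ^ 2) ≤
        ∫ x, Complex.normSq (((x : ℂ) - w)⁻¹ - m) ∂μ := by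
    intro U hU hPU hUM hUd
    calc Complex.normSq m * (P * δ ^ 2 / (M + ‖w‖) ^ 2)
        ≤ (Complex.normSq m * (δ ^ 2 / (M + ‖w‖) ^ 2)) * μ.real U := by
          have : 0 ≤ Complex.normSq m * (δ ^ 2 / (M + ‖w‖) ^ 2) := by
            have := Complex.normSq_nonneg m
            positivity
          calc _ = (Complex.normSq m * (δ ^ 2 / (M + ‖w‖) ^ 2)) * P := by ring
            _ ≤ _ := by gcongr
      _ ≤ ∫ x in U, Complex.normSq (((x : ℂ) - w)⁻¹ - m) ∂μ := by
          refine setIntegral_ge_of_const_le_real hU (measure_ne_top _ _) ?_ vi.integrableOn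
          intro x hx
          have hx0 := sub_ne hw x
          have e : ((x : ℂ) - w)⁻¹ - m = m * (u - x) * ((x : ℂ) - w)⁻¹ := by
            rw [hu]; field_simp; ring
          rw [e, Complex.normSq_mul, Complex.normSq_mul, mul_assoc, Complex.normSq_inv,
            ← div_eq_mul_inv]
          have h1 : δ ^ 2 ≤ Complex.normSq (u - x) := by
            have h := hUd x hx
            have h2 : δ ^ 2 ≤ (x - u.re) ^ 2 := by
              rw [← sq_abs (x - u.re)]; gcongr
            simp only [Complex.normSq_apply, Complex.sub_re, Complex.ofReal_re]
            nlinarith [mul_self_nonneg ((u - x).im)]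
          have h2 : Complex.normSq ((x : ℂ) - w) ≤ (M + ‖w‖) ^ 2 := by
            rw [Complex.normSq_eq_norm_sq]
            have : ‖(x : ℂ) - w‖ ≤ M + ‖w‖ := by
              refine (norm_sub_le _ _).trans ?_
              have := hUM x hx
              rw [Complex.norm_real]
              gcongr
              exact this
            gcongr
          have h3 : 0 < Complex.normSq ((x : ℂ) - w) := Complex.normSq_pos.2 hx0
          have := Complex.normSq_nonneg m
          have := Complex.normSq_nonneg (u - x)
          gcongr
      _ ≤ _ := setIntegral_le_integral vi (ae_of_all _ fun x => Complex.normSq_nonneg _)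
  have hqp : q - p = 4 * δ := by rw [hδ]; ring
  rcases le_total u.re ((p + q) / 2) with h | h
  · refine key T measurableSet_Ioo (min_le_right _ _) ?_ ?_
    · rintro x ⟨h1, h2⟩
      rw [abs_le]
      constructor <;> linarith [neg_abs_le q, le_abs_self q, abs_nonneg p]
    · rintro x ⟨h1, h2⟩
      rw [le_abs]; left; linarith
  · refine key S measurableSet_Ioo (min_le_left _ _) ?_ ?_
    · rintro x ⟨h1, h2⟩
      rw [abs_le]
      constructor <;> linarith [neg_abs_le p, le_abs_self p, abs_nonneg q]
    · rintro x ⟨h1, h2⟩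
      rw [le_abs]; right; linarith

/-- `μ(B(x₀,r)) / r² → ∞` at points of the support. -/
lemma mass_lower {μ : Measure ℝ} {n : ℕ} {Am Ap : Fin n → ℝ} {ρ : ℝ → ℝ}
    (h : Assumption2 μ n Am Ap ρ) {x₀ : ℝ} (hx : x₀ ∈ msupp μ) :
    ∃ c t r₀ : ℝ, 0 < c ∧ t < 1 ∧ 0 < r₀ ∧ ∀ r, 0 < r → r < r₀ →
      c * r ^ t * r ≤ μ.real (Metric.closedBall x₀ r) := by
  have := h.prob
  rw [h.supp_eq, Set.mem_iUnion] at hx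
  obtain ⟨j, hxA, hxB⟩ := hx
  obtain ⟨sm, sp, C, hsm1, hsm2, hsp1, hsp2, hC, hpl⟩ := h.power_law j
  have hAB := h.lt j
  set A := Am j
  set B := Ap j
  set L := B - A with hL
  have hL0 : 0 < L := by rw [hL]; linarith
  set t := max (max sm sp) 0 with ht
  have ht0 : 0 ≤ t := le_max_right _ _
  have ht1 : t < 1 := by simp [ht, hsm2, hsp2]
  have hsmt : sm ≤ t := (le_max_left _ _).trans (le_max_left _ _)
  have hspt : sp ≤ t := (le_max_right _ _).trans (le_max_left _ _)
  -- power comparison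
  have hpow : ∀ s ≤ t, ∀ y, 0 < y → y ≤ L → L ^ s * (y / L) ^ t ≤ y ^ s := by
    intro s hs y hy hyL
    have h1 : (y / L) ^ t ≤ (y / L) ^ s :=
      Real.rpow_le_rpow_of_exponent_ge (by positivity) ((div_le_one hL0).2 hyL) hs
    calc L ^ s * (y / L) ^ t ≤ L ^ s * (y / L) ^ s := by gcongr
      _ = y ^ s := by rw [← Real.mul_rpow hL0.le (by positivity)]; congr 1; field_simp
  have hC0 : 0 < C := by linarith
  set c0 := C⁻¹ * ((L ^ sm * L ^ sp) * ((1 / 4 : ℝ) ^ t * (1 / (2 * L)) ^ t)) with hc0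
  have hc00 : 0 < c0 := by positivity
  have key : ∀ r, 0 < r → r < L / 4 → ∀ U : Set ℝ, U = Set.Icc (x₀ + r / 2) (x₀ + r) ∨
      U = Set.Icc (x₀ - r) (x₀ - r / 2) →
      (∀ x ∈ U, (r / 2 ≤ x - A ∧ L / 4 ≤ B - x) ∨ (L / 4 ≤ x - A ∧ r / 2 ≤ B - x)) →
      (c0 / 2) * r ^ t * r ≤ μ.real (Metric.closedBall x₀ r) := by
    intro r hr hrL U hU hUx
    have hUb : U ⊆ Metric.closedBall x₀ r := by
      rw [Real.closedBall_eq_Icc]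
      rcases hU with rfl | rfl <;> apply Set.Icc_subset_Icc <;> linarith
    have hUm : MeasurableSet U := by
      rcases hU with rfl | rfl <;> exact measurableSet_Icc
    have hUv : volume U = ENNReal.ofReal (r / 2) := by
      rcases hU with rfl | rfl <;> rw [Real.volume_Icc] <;> congr 1 <;> ring
    have hden : ∀ᵐ x ∂(volume.restrict U), ENNReal.ofReal (c0 * r ^ t) ≤ ENNReal.ofReal (ρ x) := by
      rw [ae_restrict_iff' hUm]
      filter_upwards [hpl] with x hx hxU
      apply ENNReal.ofReal_le_ofReal
      have hh := hUx x hxU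
      have hxA' : 0 < x - A := by rcases hh with hh | hh <;> linarith
      have hxB' : 0 < B - x := by rcases hh with hh | hh <;> linarith
      have h1 := (hx ⟨by linarith, by linarith⟩).1
      rw [lt_div_iff₀ (by positivity)] at h1
      refine le_trans ?_ h1.le
      have h2 := hpow sm hsmt (x - A) hxA' (by rw [hL]; linarith)
      have h3 := hpow sp hspt (B - x) hxB' (by rw [hL]; linarith)
      have h4 : (1 / 4 : ℝ) ^ t * (r / (2 * L)) ^ t ≤ ((x - A) / L) ^ t * ((B - x) / L) ^ t := by
        have hr2 : r / (2 * L) = (r / 2) / L := by field_simp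
        have hr4 : (1 / 4 : ℝ) = (L / 4) / L := by field_simp
        rw [hr2, hr4]
        rcases hh with ⟨ha, hb⟩ | ⟨ha, hb⟩
        · rw [mul_comm]; gcongr
        · gcongr
      have h5 : (r / (2 * L)) ^ t = (1 / (2 * L)) ^ t * r ^ t := by
        rw [← Real.mul_rpow (by positivity) hr.le]; congr 1; ring
      calc c0 * r ^ t = C⁻¹ * ((L ^ sm * L ^ sp) * ((1 / 4 : ℝ) ^ t * (r / (2 * L)) ^ t)) := by
            rw [h5, hc0]; ring
        _ ≤ C⁻¹ * ((L ^ sm * L ^ sp) * (((x - A) / L) ^ t * ((B - x) / L) ^ t)) := by gcongr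
        _ = C⁻¹ * ((L ^ sm * ((x - A) / L) ^ t) * (L ^ sp * ((B - x) / L) ^ t)) := by ring
        _ ≤ C⁻¹ * ((x - A) ^ sm * (B - x) ^ sp) := by gcongr
    have hmu : ENNReal.ofReal (c0 * r ^ t) * ENNReal.ofReal (r / 2) ≤ μ U := by
      calc _ = ∫⁻ x in U, ENNReal.ofReal (c0 * r ^ t) := by rw [setLIntegral_const, hUv]
        _ ≤ ∫⁻ x in U, ENNReal.ofReal (ρ x) := lintegral_mono_ae hden
        _ = μ U := by
          conv_rhs => rw [h.ac]
          rw [withDensity_apply _ hUm]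
    rw [← ENNReal.ofReal_mul (by positivity)] at hmu
    have hfin := hmu.trans (measure_mono hUb)
    rw [measureReal_def]
    refine le_trans (le_of_eq (by ring)) ((ENNReal.ofReal_le_iff_le_toReal (measure_ne_top _ _)).1 hfin)
  refine ⟨c0 / 2, t, L / 4, by positivity, ht1, by positivity, fun r hr hrL => ?_⟩
  rcases le_total x₀ ((A + B) / 2) with hm | hm
  · refine key r hr hrL _ (Or.inl rfl) ?_
    rintro x ⟨h1, h2⟩
    left; constructor <;> linarith
  · refine key r hr hrL _ (Or.inr rfl) ?_
    rintro x ⟨h1, h2⟩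
    right; constructor <;> linarith

/-- `I_μ(w) → ∞` as `w → x₀ ∈ supp μ`. -/
lemma I_large {μ : Measure ℝ} {n : ℕ} {Am Ap : Fin n → ℝ} {ρ : ℝ → ℝ}
    (h : Assumption2 μ n Am Ap ρ) {x₀ : ℝ} (hx : x₀ ∈ msupp μ) (K : ℝ) :
    ∃ r₁ > 0, ∀ w : ℂ, 0 < w.im → ‖w - x₀‖ < r₁ → K ≤ Ifun μ w := by
  have := h.prob
  obtain ⟨c, t, r₀, hc, ht, hr₀, hmass⟩ := mass_lower h hx
  have hlim : Tendsto (fun r : ℝ => r ^ (1 - t)) (𝓝 0) (𝓝 0) := by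
    have := (Real.continuousAt_rpow_const 0 (1 - t) (Or.inr (by linarith))).tendsto
    rwa [Real.zero_rpow (by linarith)] at this
  have hev : ∀ᶠ r : ℝ in 𝓝 0, r ^ (1 - t) < c / (4 * (|K| + 1)) :=
    hlim.eventually_lt_const (by positivity)
  obtain ⟨r₁, hr₁, hball⟩ := Metric.eventually_nhds_iff.1 hev
  refine ⟨min r₀ r₁, lt_min hr₀ hr₁, fun w hw hwr => ?_⟩
  set r := ‖w - x₀‖ with hr
  have hr0 : 0 < r := by
    rw [hr, norm_sub_rev]; exact norm_pos_iff.2 (sub_ne hw x₀)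
  have hm := hmass r hr0 (hwr.trans_le (min_le_left _ _))
  have hb := hball (y := r) (by
    rw [Real.dist_eq, sub_zero, abs_of_pos hr0]; exact hwr.trans_le (min_le_right _ _))
  have hI : (1 / (4 * r ^ 2)) * μ.real (Metric.closedBall x₀ r) ≤ Ifun μ w := by
    unfold Ifun
    refine le_trans ?_ (setIntegral_le_integral (s := Metric.closedBall x₀ r) (I_integrable μ hw)
      (ae_of_all _ fun x => inv_nonneg.2 (Complex.normSq_nonneg _)))
    refine setIntegral_ge_of_const_le_real Metric.isClosed_closedBall.measurableSet
      (measure_ne_top _ _) ?_ (I_integrable μ hw).integrableOn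
    intro x hx
    rw [one_div]
    apply inv_anti₀ (Complex.normSq_pos.2 (sub_ne hw x))
    rw [Complex.normSq_eq_norm_sq]
    have : ‖(x : ℂ) - w‖ ≤ 2 * r := by
      calc ‖(x : ℂ) - w‖ = ‖((x - x₀ : ℝ) : ℂ) - (w - x₀)‖ := by congr 1; push_cast; ring
        _ ≤ ‖((x - x₀ : ℝ) : ℂ)‖ + r := norm_sub_le _ _
        _ ≤ r + r := by
          rw [Metric.mem_closedBall, Real.dist_eq] at hx
          rw [Complex.norm_real, Real.norm_eq_abs]
          linarith
        _ = 2 * r := by ring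
    calc ‖(x : ℂ) - w‖ ^ 2 ≤ (2 * r) ^ 2 := by gcongr
      _ = _ := by ring
  refine le_trans ?_ hI
  have hrt : r ^ t * r ^ (1 - t) = r := by
    rw [← Real.rpow_add hr0]; simp
  have hrt0 : 0 < r ^ t := by positivity
  rw [lt_div_iff₀ (by positivity)] at hb
  have : (|K| + 1) * (4 * r ^ 2) ≤ μ.real (Metric.closedBall x₀ r) := by
    refine le_trans ?_ hm
    calc (|K| + 1) * (4 * r ^ 2) = (r ^ (1 - t) * (4 * (|K| + 1))) * (r ^ t * r) := by
          nth_rewrite 1 [pow_two]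
          nth_rewrite 1 [← hrt]
          ring
      _ ≤ c * (r ^ t * r) := by gcongr
      _ = _ := by ring
  rw [one_div, inv_mul_eq_div, le_div_iff₀ (by positivity)]
  refine le_trans ?_ this
  gcongr
  linarith [le_abs_self K]

lemma small_ball {μ : Measure ℝ} {n : ℕ} {Am Ap : Fin n → ℝ} {ρ : ℝ → ℝ}
    (h : Assumption2 μ n Am Ap ρ) (x₀ : ℝ) {ε : ℝ} (hε : 0 < ε) :
    ∃ δ > 0, μ.real (Metric.closedBall x₀ δ) < ε := by
  have := h.prob
  have h0 : μ {x₀} = 0 := by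
    have : μ ≪ volume := by
      rw [h.ac]; exact withDensity_absolutelyContinuous _ _
    exact this (by simp)
  have hA := tendsto_measure_cthickening_of_isClosed (μ := μ) (s := {x₀})
    ⟨1, one_pos, measure_ne_top _ _⟩ isClosed_singleton
  rw [h0] at hA
  have hev := hA.eventually_lt_const (u := ENNReal.ofReal ε) (by simpa using hε)
  obtain ⟨d, hd, hball⟩ := Metric.eventually_nhds_iff.1 hev
  have := hball (y := d / 2) (by rw [Real.dist_eq, sub_zero, abs_of_pos] <;> linarith)
  refine ⟨d / 2, by linarith, ?_⟩
  rw [Metric.cthickening_singleton _ (by linarith)] at this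
  rw [measureReal_def]
  exact (ENNReal.lt_ofReal_iff_toReal_lt (measure_ne_top _ _)).1 this

/-- Lemma A. -/
lemma ratio_large {μ : Measure ℝ} {n : ℕ} {Am Ap : Fin n → ℝ} {ρ : ℝ → ℝ}
    (h : Assumption2 μ n Am Ap ρ) {x₀ : ℝ} (hx : x₀ ∈ msupp μ) {ε : ℝ} (hε : 0 < ε) :
    ∃ r > 0, ∀ w : ℂ, 0 < w.im → ‖w - x₀‖ < r →
      1 + Complex.normSq (stT μ w) ≤ ε * Ifun μ w := by
  have := h.prob
  obtain ⟨δ, hδ, hμδ⟩ := small_ball h x₀ (ε := ε / 4) (by linarith)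
  obtain ⟨r₁, hr₁, hI⟩ := I_large h hx ((1 + 2 * (2 / δ) ^ 2) * 2 / ε)
  refine ⟨min r₁ (δ / 2), lt_min hr₁ (by linarith), fun w hw hwr => ?_⟩
  have hIw := hI w hw (hwr.trans_le (min_le_left _ _))
  have hwδ : ‖w - x₀‖ < δ / 2 := hwr.trans_le (min_le_right _ _)
  rw [div_le_iff₀ hε] at hIw
  set f : ℝ → ℝ := fun x => ‖((x : ℂ) - w)⁻¹‖ with hf
  have fi : Integrable f μ := (stT_integrable μ hw).norm
  have hf2 : ∀ x, f x ^ 2 = (Complex.normSq ((x : ℂ) - w))⁻¹ := fun x => by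
    simp only [hf]
    rw [← Complex.normSq_eq_norm_sq, Complex.normSq_inv]
  set N := Metric.closedBall x₀ δ with hN
  have hNm : MeasurableSet N := Metric.isClosed_closedBall.measurableSet
  have hIp := I_pos μ hw
  have hfar : ∫ x in Nᶜ, f x ∂μ ≤ 2 / δ := by
    calc ∫ x in Nᶜ, f x ∂μ ≤ ∫ x in Nᶜ, (2 / δ) ∂μ := by
          refine setIntegral_mono_on fi.integrableOn (integrable_const _) hNm.compl ?_
          intro x hxN
          have hd : δ < |x - x₀| := by
            simpa [hN, Real.dist_eq] using hxN
          simp only [hf, norm_inv]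
          rw [show (2 / δ) = (δ / 2)⁻¹ by rw [inv_div]]
          apply inv_anti₀ (by linarith)
          have h1 : |x - x₀| ≤ ‖(x : ℂ) - w‖ + ‖w - x₀‖ := by
            rw [← Real.norm_eq_abs, ← Complex.norm_real]
            refine le_trans (le_of_eq ?_) (norm_add_le _ _)
            congr 1; push_cast; ring
          linarith
      _ = μ.real Nᶜ * (2 / δ) := by simp
      _ ≤ 1 * (2 / δ) := by gcongr; exact measureReal_le_one
      _ = _ := one_mul _
  have hnear : (∫ x in N, f x ∂μ) ^ 2 ≤ (ε / 4) * Ifun μ w := by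
    -- Cauchy–Schwarz via a quadratic
    set a := ∫ x in N, f x ∂μ with ha
    set p := μ.real N with hp
    set J := ∫ x in N, f x ^ 2 ∂μ with hJ
    have i2 : Integrable (fun x => f x ^ 2) μ := by
      simp only [hf2]; exact I_integrable μ hw
    have hJI : J ≤ Ifun μ w := by
      have := setIntegral_le_integral (s := N) i2 (ae_of_all _ fun x => sq_nonneg (f x))
      simp only [hf2] at this
      simpa only [hJ, hf2, Ifun] using this
    have hq : ∀ s : ℝ, 0 ≤ p * (s * s) + (-2 * a) * s + J := by
      intro s
      have h0 : 0 ≤ ∫ x in N, (f x - s) ^ 2 ∂μ := integral_nonneg fun x => sq_nonneg _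
      have e : ∫ x in N, (f x - s) ^ 2 ∂μ = J - 2 * s * a + p * s ^ 2 := by
        have : (fun x => (f x - s) ^ 2) = fun x => f x ^ 2 - 2 * s * f x + s ^ 2 := by
          ext x; ring
        have j1 : Integrable (fun x => f x ^ 2) (μ.restrict N) := i2.integrableOn
        have j2 : Integrable (fun x => 2 * s * f x) (μ.restrict N) :=
          Integrable.const_mul fi.integrableOn _
        have j3 : Integrable (fun x => f x ^ 2 - 2 * s * f x) (μ.restrict N) := j1.sub j2
        rw [this, integral_add j3 (integrable_const _), integral_sub j1 j2, integral_const_mul]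
        simp [hp, hJ, ha]
      rw [e] at h0
      linarith
    have hd := discrim_le_zero hq
    rw [discrim] at hd
    have hp0 : 0 ≤ p := measureReal_nonneg
    have : a ^ 2 ≤ p * J := by nlinarith
    calc a ^ 2 ≤ p * J := this
      _ ≤ p * Ifun μ w := by gcongr
      _ ≤ _ := by gcongr
  have hm : ‖stT μ w‖ ≤ (∫ x in N, f x ∂μ) + ∫ x in Nᶜ, f x ∂μ := by
    rw [integral_add_compl hNm fi]
    exact norm_integral_le_integral_norm _
  have hfar0 : 0 ≤ ∫ x in Nᶜ, f x ∂μ := integral_nonneg fun x => norm_nonneg _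
  rw [Complex.normSq_eq_norm_sq]
  have h1 : ‖stT μ w‖ ^ 2 ≤ ((∫ x in N, f x ∂μ) + ∫ x in Nᶜ, f x ∂μ) ^ 2 := by gcongr
  have h2 : (∫ x in Nᶜ, f x ∂μ) ^ 2 ≤ (2 / δ) ^ 2 := by gcongr
  nlinarith [sq_nonneg ((∫ x in N, f x ∂μ) - ∫ x in Nᶜ, f x ∂μ)]

set_option maxHeartbeats 800000 in
/-- Core contradiction at a real point. -/
lemma core {μa μb : Measure ℝ} {na nb : ℕ}
    {Am Ap : Fin na → ℝ} {Bm Bp : Fin nb → ℝ} {ρa ρb : ℝ → ℝ}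
    (hμa : Assumption2 μa na Am Ap ρa) (hμb : Assumption2 μb nb Bm Bp ρb)
    {ωa ωb : ℂ → ℂ} (hsub : IsSubordPair μa μb ωa ωb) {E : ℂ} (hE : E.im = 0)
    {x₀ : ℝ} (hx : x₀ ∈ msupp μb) (hlim : Tendsto ωa (𝓝[UHP] E) (𝓝 (x₀ : ℂ))) : False := by
  have := hμa.prob
  have := hμb.prob
  have hj : ∃ p q : ℝ, p < q ∧ p ∈ msupp μa ∧ q ∈ msupp μa := by
    let j : Fin na := ⟨0, hμa.n_pos⟩
    have hl := hμa.lt j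
    refine ⟨Am j, Ap j, hl, ?_, ?_⟩ <;> rw [hμa.supp_eq, Set.mem_iUnion] <;>
      exact ⟨j, by constructor <;> linarith⟩
  obtain ⟨p, q, hpq, hp, hq⟩ := hj
  obtain ⟨c, M, hc, hM, hB⟩ := lower_hat μa hpq hp hq
  set K := M + (|x₀| + 1) + (‖E‖ + 1) with hK
  have hK0 : 0 < K := by positivity
  set K2 := 1 + 2 * K ^ 2 / c + 2 / c with hK2
  have hK20 : 0 < K2 := by positivity
  obtain ⟨r, hr, hA⟩ := ratio_large hμb hx (ε := 1 / (2 * K2)) (by positivity)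
  have hne : (𝓝[UHP] E).NeBot := by
    rw [← mem_closure_iff_nhdsWithin_neBot]
    have : closure UHP = {z : ℂ | 0 ≤ z.im} := Complex.closure_setOfPred_lt_im 0
    rw [this]
    simp [hE]
  have e1 : ∀ᶠ z in 𝓝[UHP] E, ‖ωa z - x₀‖ < min r 1 := by
    have := Metric.tendsto_nhds.1 hlim (min r 1) (lt_min hr one_pos)
    simpa [dist_eq_norm] using this
  have e2 : ∀ᶠ z in 𝓝[UHP] E, ‖z - E‖ < 1 := by
    have := Metric.tendsto_nhds.1 (tendsto_id.mono_left (nhdsWithin_le_nhds (s := UHP) (a := E)))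
      1 one_pos
    simpa [dist_eq_norm] using this
  obtain ⟨z, hz1, hz2, hz⟩ := (e1.and (e2.and self_mem_nhdsWithin)).exists
  have hzim : 0 < z.im := hz
  have ha : 0 < (ωa z).im := hsub.maps_a z hz
  have hb : 0 < (ωb z).im := hsub.maps_b z hz
  have hal := hsub.imLe_a z hz
  have hbl := hsub.imLe_b z hz
  have hA' := hA _ ha (hz1.trans_le (min_le_left _ _))
  have hB' := hB _ hb
  have fa := nrT_im μa hb
  have fb := nrT_im μb ha
  rw [← hsub.eqn_a z hz] at fa
  rw [← hsub.eqn_b z hz] at fb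
  simp only [Complex.sub_im, Complex.add_im] at fa fb
  have hna : 0 < Complex.normSq (stT μa (ωb z)) := Complex.normSq_pos.2 (stT_ne μa hb)
  have hnb : 0 < Complex.normSq (stT μb (ωa z)) := Complex.normSq_pos.2 (stT_ne μb ha)
  have hIp := I_pos μb ha
  -- bound on ωb
  have hωb : M + ‖ωb z‖ ≤ K + ‖nrT μb (ωa z)‖ := by
    have e : ωb z = nrT μb (ωa z) - ωa z + z := by rw [← hsub.eqn_b z hz]; ring
    have h1 : ‖ωb z‖ ≤ ‖nrT μb (ωa z)‖ + ‖ωa z‖ + ‖z‖ := by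
      calc ‖ωb z‖ = ‖nrT μb (ωa z) - ωa z + z‖ := by rw [← e]
        _ ≤ _ := (norm_add_le _ _).trans (by gcongr; exact norm_sub_le _ _)
    have h2 : ‖ωa z‖ ≤ |x₀| + 1 := by
      have h3 := norm_add_le (ωa z - x₀) (x₀ : ℂ)
      rw [sub_add_cancel, Complex.norm_real, Real.norm_eq_abs] at h3
      linarith [hz1.trans_le (min_le_right _ _)]
    have h4 : ‖z‖ ≤ ‖E‖ + 1 := by
      have h3 := norm_add_le (z - E) E
      rw [sub_add_cancel] at h3
      linarith
    rw [hK]; linarith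
  set F := ‖nrT μb (ωa z)‖ with hF
  have hF2 : F ^ 2 * Complex.normSq (stT μb (ωa z)) = 1 := by
    rw [hF, ← Complex.normSq_eq_norm_sq]
    unfold nrT
    rw [Complex.normSq_neg, Complex.normSq_inv]
    field_simp
  have hF0 : 0 ≤ F := norm_nonneg _
  set W := (M + ‖ωb z‖) ^ 2 with hW
  have hW0 : 0 < W := by positivity
  have hWF : W ≤ 2 * K ^ 2 + 2 * F ^ 2 := by
    have : W ≤ (K + F) ^ 2 := by rw [hW]; gcongr
    nlinarith [sq_nonneg (K - F)]
  set ma := Complex.normSq (stT μa (ωb z))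
  set mb := Complex.normSq (stT μb (ωa z))
  set Ia := Ifun μa (ωb z)
  set Ib := Ifun μb (ωa z)
  set a := (ωa z).im
  set b := (ωb z).im
  set y := z.im
  -- c/W * b ≤ a - y
  have g1 : c / W * b ≤ a - y := by
    have : b * (ma * (c / W)) ≤ b * (Ia - ma) := by gcongr
    have h2 : b * (Ia - ma) = (a - y) * ma := by linarith
    rw [h2] at this
    have h3 : (c / W * b) * ma ≤ (a - y) * ma := by linarith
    exact le_of_mul_le_mul_right h3 hna
  have g2 : a * (Ib - mb) = (b - y) * mb := by linarith
  -- (Ib - mb) c ≤ W mb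
  have g3 : c * (Ib - mb) ≤ W * mb := by
    have h1 : c / W * b ≤ a := by linarith
    rw [div_mul_eq_mul_div, div_le_iff₀ hW0] at h1
    have h2 : a * (c * (Ib - mb)) ≤ a * (W * mb) := by
      calc a * (c * (Ib - mb)) = (c * (b - y)) * mb := by rw [mul_left_comm, g2]; ring
        _ ≤ (a * W) * mb := by
          refine mul_le_mul_of_nonneg_right ?_ hnb.le
          have : 0 ≤ c * y := by positivity
          linarith
        _ = _ := by ring
    exact le_of_mul_le_mul_left h2 ha
  have g4 : W * mb ≤ 2 * K ^ 2 * mb + 2 := by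
    have : W * mb ≤ (2 * K ^ 2 + 2 * F ^ 2) * mb := by gcongr
    linarith
  have g5 : Ib ≤ mb + (2 * K ^ 2 * mb + 2) / c := by
    have : Ib - mb ≤ (2 * K ^ 2 * mb + 2) / c := by
      rw [le_div_iff₀ hc]; linarith
    linarith
  have g6 : Ib ≤ K2 * (1 + mb) := by
    refine g5.trans ?_
    have e : K2 * (1 + mb) = mb + (2 * K ^ 2 * mb + 2) / c + (1 + 2 * K ^ 2 / c + 2 / c * mb) := by
      rw [hK2]; ring
    rw [e]
    have : 0 ≤ 1 + 2 * K ^ 2 / c + 2 / c * mb := by positivity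
    linarith
  have g7 : K2 * (1 + mb) ≤ Ib / 2 := by
    calc K2 * (1 + mb) ≤ K2 * (1 / (2 * K2) * Ib) := by gcongr
      _ = _ := by field_simp
  linarith

lemma half {μa μb : Measure ℝ} {na nb : ℕ}
    {Am Ap : Fin na → ℝ} {Bm Bp : Fin nb → ℝ} {ρa ρb : ℝ → ℝ}
    (hμa : Assumption2 μa na Am Ap ρa) (hμb : Assumption2 μb nb Bm Bp ρb)
    {ωa ωb : ℂ → ℂ} (hsub : IsSubordPair μa μb ωa ωb)
    {Ωa : ℂ → OnePoint ℂ} (hΩa : ExtendsToRP ωa Ωa) (e₁ e₂ : ℝ) :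
    ∃ Ca : ℝ, 0 < Ca ∧
      ∀ z ∈ {z : ℂ | z.re ∈ Set.Icc e₁ e₂ ∧ 0 ≤ z.im ∧ z.im ≤ 1},
        ∀ w : ℂ, Ωa z = (w : OnePoint ℂ) →
          Ca ≤ Metric.infDist w ((fun x : ℝ => (x : ℂ)) '' msupp μb) := by
  set K : Set ℂ := (fun x : ℝ => (x : ℂ)) '' msupp μb with hKdef
  set J : Set ℂ := {z : ℂ | z.re ∈ Set.Icc e₁ e₂ ∧ 0 ≤ z.im ∧ z.im ≤ 1} with hJdef
  have hK : IsCompact K := by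
    refine IsCompact.image ?_ Complex.continuous_ofReal
    rw [hμb.supp_eq]
    exact isCompact_iUnion fun j => isCompact_Icc
  have hKne : K.Nonempty := by
    refine Set.Nonempty.image _ ?_
    rw [hμb.supp_eq]
    let j : Fin nb := ⟨0, hμb.n_pos⟩
    exact ⟨Bm j, Set.mem_iUnion.2 ⟨j, le_rfl, (hμb.lt j).le⟩⟩
  have hJ : IsCompact J := by
    have : J = Set.Icc e₁ e₂ ×ℂ Set.Icc (0 : ℝ) 1 := by
      ext z; simp [hJdef, Complex.mem_reProdIm]
    rw [this]
    exact isCompact_Icc.reProdIm isCompact_Icc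
  have hJC : J ⊆ CUHP := fun z hz => hz.2.1
  have havoid : ∀ z ∈ J, ∀ w ∈ K, Ωa z ≠ (w : OnePoint ℂ) := by
    rintro z hz _ ⟨x, hx, rfl⟩ heq
    rcases hz.2.1.eq_or_lt with h0 | h0
    · refine core hμa hμb hsub h0.symm hx ?_
      have h1 : Tendsto Ωa (𝓝[UHP] z) (𝓝 (Ωa z)) :=
        (hΩa.1 z (hJC hz)).mono (fun y (hy : 0 < y.im) => show 0 ≤ y.im from hy.le)
      rw [heq] at h1
      have h2 : Tendsto (fun y => (ωa y : OnePoint ℂ)) (𝓝[UHP] z) (𝓝 ((x : ℂ) : OnePoint ℂ)) :=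
        h1.congr' (by
          filter_upwards [self_mem_nhdsWithin] with y hy
          exact hΩa.2 y hy)
      exact (OnePoint.isOpenEmbedding_coe.isInducing.tendsto_nhds_iff).2 h2
    · rw [hΩa.2 z h0] at heq
      have h1 : ωa z = (x : ℂ) := OnePoint.coe_injective heq
      have h2 : 0 < (ωa z).im := hsub.maps_a z h0
      rw [h1] at h2
      simp at h2
  refine hJ.induction_on (p := fun s => ∃ Ca : ℝ, 0 < Ca ∧ ∀ z ∈ s, ∀ w : ℂ,
    Ωa z = (w : OnePoint ℂ) → Ca ≤ Metric.infDist w K) ?_ ?_ ?_ ?_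
  · exact ⟨1, one_pos, by simp⟩
  · rintro s t hst ⟨C, hC, h⟩
    exact ⟨C, hC, fun z hz => h z (hst hz)⟩
  · rintro s t ⟨C, hC, h⟩ ⟨D, hD, h'⟩
    refine ⟨min C D, lt_min hC hD, ?_⟩
    rintro z (hz | hz) w hw
    · exact (min_le_left _ _).trans (h z hz w hw)
    · exact (min_le_right _ _).trans (h' z hz w hw)
  · intro z hz
    have hex : ∃ ε > 0, Ωa z ∉ ((↑) : ℂ → OnePoint ℂ) '' Metric.cthickening ε K := by
      rcases hp : Ωa z with _ | v
      · refine ⟨1, one_pos, ?_⟩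
        rintro ⟨w, -, hw⟩
        exact OnePoint.coe_ne_infty w hw
      · have hv : v ∉ K := fun hv => havoid z hz v hv hp
        have hpos : 0 < Metric.infDist v K := (hK.isClosed.notMem_iff_infDist_pos hKne).1 hv
        refine ⟨Metric.infDist v K / 2, by linarith, ?_⟩
        rintro ⟨w, hw, hwv⟩
        have : w = v := OnePoint.coe_injective hwv
        subst this
        rw [hK.cthickening_eq_biUnion_closedBall (by linarith)] at hw
        simp only [Set.mem_iUnion, Metric.mem_closedBall] at hw
        obtain ⟨k, hk, hd⟩ := hw
        have := Metric.infDist_le_dist_of_mem (x := w) hk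
        linarith
    obtain ⟨ε, hε, hnot⟩ := hex
    have hcl : IsClosed (((↑) : ℂ → OnePoint ℂ) '' Metric.cthickening ε K) :=
      (hK.cthickening.image OnePoint.continuous_coe).isClosed
    have hcont : Tendsto Ωa (𝓝[J] z) (𝓝 (Ωa z)) := (hΩa.1 z (hJC hz)).mono hJC
    refine ⟨_, hcont (hcl.isOpen_compl.mem_nhds hnot), ε, hε, ?_⟩
    intro z' hz' w hw
    by_contra hlt
    push Not at hlt
    apply hz'
    exact ⟨w, (Metric.thickening_subset_cthickening _ _) ((Metric.mem_thickening_iff_infDist_lt hKne).2 hlt), hw.symm⟩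

end Helpers


/-- On the spectral domain `𝓙`, `ω_α` stays at positive distance from
`supp(μ_β)` and `ω_β` stays at positive distance from `supp(μ_α)`. -/
theorem subordination_away_from_supports
    (μa μb μab : Measure ℝ) (na nb : ℕ)
    (Am Ap : Fin na → ℝ) (Bm Bp : Fin nb → ℝ) (ρa ρb : ℝ → ℝ)
    (hμa : Assumption2 μa na Am Ap ρa)
    (hμb : Assumption2 μb nb Bm Bp ρb)
    (ωa ωb : ℂ → ℂ) (hsub : IsSubordPair μa μb ωa ωb)
    (hconv : IsFreeConv μa μb ωb μab)
    (Ωa Ωb : ℂ → OnePoint ℂ)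
    (hΩa : ExtendsToRP ωa Ωa) (hΩb : ExtendsToRP ωb Ωb)
    -- the compact interval 𝓔 = [e₁, e₂] containing supp(μ_α ⊞ μ_β)
    (e₁ e₂ : ℝ) (hE : msupp μab ⊆ Set.Icc e₁ e₂) :
    (∃ Ca : ℝ, 0 < Ca ∧
      ∀ z ∈ {z : ℂ | z.re ∈ Set.Icc e₁ e₂ ∧ 0 ≤ z.im ∧ z.im ≤ 1},
        ∀ w : ℂ, Ωa z = (w : OnePoint ℂ) →
          Ca ≤ Metric.infDist w ((fun x : ℝ => (x : ℂ)) '' msupp μb)) ∧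
    (∃ Cb : ℝ, 0 < Cb ∧
      ∀ z ∈ {z : ℂ | z.re ∈ Set.Icc e₁ e₂ ∧ 0 ≤ z.im ∧ z.im ≤ 1},
        ∀ w : ℂ, Ωb z = (w : OnePoint ℂ) →
          Cb ≤ Metric.infDist w ((fun x : ℝ => (x : ℂ)) '' msupp μa)) := by
  exact ⟨half hμa hμb hsub hΩa e₁ e₂,
    half hμb hμa ⟨hsub.diff_b, hsub.diff_a, hsub.maps_b, hsub.maps_a, hsub.imLe_b, hsub.imLe_a,
      hsub.lim_b, hsub.lim_a, fun z hz => by rw [add_comm]; exact hsub.eqn_b z hz,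
      fun z hz => by rw [add_comm]; exact hsub.eqn_a z hz⟩ hΩb e₁ e₂⟩
end

section
/- Let μ_α and μ_β satisfy Assumption 2 and let E^α be an atom of μ̂_α (equivalently, a zero of m_{μ_α} lying at strictly positive distance from supp(μ_α), with μ̂_α({E^α}) = 1/m_{μ_α}'(E^α)). Then: (1) if ∫_ℝ x² dμ_β(x) > μ̂_α({E^α}), then E^α does not belong to ω_β(ℝ), the range on ℝ of the continuous extension of ω_β; (2) if ∫_ℝ x² dμ_β(x) < μ̂_α({E^α}), then E^α ∈ ω_β(ℝ) and E^α ∉ supp(μ_α ⊞ μ_β); (3) if ∫_ℝ x² dμ_β(x) = μ̂_α({E^α}), then E^α ∈ ω_β(ℝ). The same statements hold with α and β interchanged. -/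
open MeasureTheory Topology Filter Set

theorem aux_meas (w : ℂ) : Measurable fun x : ℝ => ((x : ℂ) - w)⁻¹ := by
  fun_prop

theorem aux_im_le (x : ℝ) (w : ℂ) : |w.im| ≤ ‖(x : ℂ) - w‖ := by
  have := Complex.abs_im_le_norm ((x : ℂ) - w)
  simpa using this

theorem aux_integrable (μ : Measure ℝ) [IsFiniteMeasure μ] (w : ℂ) (d : ℝ) (hd : 0 < d)
    (h : ∀ᵐ x : ℝ ∂μ, d ≤ ‖(x : ℂ) - w‖) : Integrable (fun x : ℝ => ((x : ℂ) - w)⁻¹) μ := by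
  refine Integrable.of_bound (aux_meas w).aestronglyMeasurable d⁻¹ ?_
  filter_upwards [h] with x hx
  rw [norm_inv]
  exact inv_anti₀ hd hx

theorem aux_integrable_sq (μ : Measure ℝ) [IsFiniteMeasure μ] (w : ℂ) (d : ℝ) (hd : 0 < d)
    (h : ∀ᵐ x : ℝ ∂μ, d ≤ ‖(x : ℂ) - w‖) :
    Integrable (fun x : ℝ => (Complex.normSq ((x : ℂ) - w))⁻¹) μ := by
  refine Integrable.of_bound (by
    apply Measurable.aestronglyMeasurable
    exact (Complex.continuous_normSq.measurable.comp (by fun_prop)).inv) (d ^ 2)⁻¹ ?_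
  filter_upwards [h] with x hx
  rw [norm_inv, Complex.normSq_eq_norm_sq, Real.norm_of_nonneg (by positivity)]
  exact inv_anti₀ (by positivity) (by gcongr)

theorem aux_uhp_ae (μ : Measure ℝ) (w : ℂ) (hw : w ∈ UHP) :
    ∀ᵐ x : ℝ ∂μ, w.im ≤ ‖(x : ℂ) - w‖ :=
  Eventually.of_forall fun x => (le_abs_self _).trans (aux_im_le x w)

theorem aux_cont (μ : Measure ℝ) [IsFiniteMeasure μ] (w : ℂ) (d : ℝ) (hd : 0 < d)
    (h : ∀ᵐ x : ℝ ∂μ, d ≤ ‖(x : ℂ) - w‖) :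
    ContinuousAt (stT μ) w ∧ ContinuousAt (Ifun μ) w := by
  have key : ∀ᶠ v in 𝓝 w, ∀ᵐ x : ℝ ∂μ, d / 2 ≤ ‖(x : ℂ) - v‖ := by
    filter_upwards [Metric.ball_mem_nhds w (half_pos hd)] with v hv
    filter_upwards [h] with x hx
    rw [Metric.mem_ball, dist_eq_norm] at hv
    have : ‖(x : ℂ) - w‖ ≤ ‖(x : ℂ) - v‖ + ‖v - w‖ := by
      simpa using norm_add_le ((x : ℂ) - v) (v - w)
    linarith
  have hne : ∀ᵐ x : ℝ ∂μ, (x : ℂ) - w ≠ 0 := by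
    filter_upwards [h] with x hx
    exact norm_pos_iff.1 (hd.trans_le hx)
  constructor
  · refine tendsto_integral_filter_of_dominated_convergence (fun _ => (d / 2)⁻¹) ?_ ?_
      (integrable_const _) ?_
    · exact Eventually.of_forall fun v => (aux_meas v).aestronglyMeasurable
    · filter_upwards [key] with v hv
      filter_upwards [hv] with x hx
      rw [norm_inv]
      exact inv_anti₀ (half_pos hd) hx
    · filter_upwards [hne] with x hx
      have : ContinuousAt (fun v : ℂ => ((x : ℂ) - v)⁻¹) w :=
        ContinuousAt.inv₀ (by fun_prop) hx
      exact this
  · refine tendsto_integral_filter_of_dominated_convergence (fun _ => ((d / 2) ^ 2)⁻¹) ?_ ?_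
      (integrable_const _) ?_
    · exact Eventually.of_forall fun v => ((Complex.continuous_normSq.measurable.comp
        (by fun_prop : Measurable fun x : ℝ => (x : ℂ) - v)).inv).aestronglyMeasurable
    · filter_upwards [key] with v hv
      filter_upwards [hv] with x hx
      rw [norm_inv, Complex.normSq_eq_norm_sq, Real.norm_of_nonneg (by positivity)]
      exact inv_anti₀ (by positivity) (by gcongr)
    · filter_upwards [hne] with x hx
      have : ContinuousAt (fun v : ℂ => (Complex.normSq ((x : ℂ) - v))⁻¹) w :=
        ContinuousAt.inv₀ (Complex.continuous_normSq.continuousAt.comp (by fun_prop))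
          (by simpa using hx)
      exact this

theorem aux_im (μ : Measure ℝ) [IsFiniteMeasure μ] (w : ℂ) (hw : w ∈ UHP) :
    (stT μ w).im = w.im * Ifun μ w := by
  have hi := aux_integrable μ w w.im hw (aux_uhp_ae μ w hw)
  have := Complex.imCLM.integral_comp_comm hi
  simp only [Complex.imCLM_apply] at this
  rw [stT, ← this, Ifun, ← integral_const_mul]
  congr 1
  ext x
  rw [Complex.inv_im]
  simp [div_eq_mul_inv]

theorem aux_I_pos (μ : Measure ℝ) [IsProbabilityMeasure μ] (w : ℂ) (d : ℝ) (hd : 0 < d)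
    (h : ∀ᵐ x : ℝ ∂μ, d ≤ ‖(x : ℂ) - w‖) : 0 < Ifun μ w := by
  have hnn : ∀ x : ℝ, 0 ≤ (Complex.normSq ((x : ℂ) - w))⁻¹ :=
    fun x => inv_nonneg.2 (Complex.normSq_nonneg _)
  have h0 : 0 ≤ Ifun μ w := integral_nonneg hnn
  refine lt_of_le_of_ne h0 fun h1 => ?_
  have h2 := (integral_eq_zero_iff_of_nonneg hnn (aux_integrable_sq μ w d hd h)).1 h1.symm
  have h3 : ∀ᵐ x : ℝ ∂μ, False := by
    filter_upwards [h2, h] with x hx hx'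
    have : (x : ℂ) - w = 0 := by simpa using hx
    rw [this, norm_zero] at hx'
    linarith
  simp at h3
  exact IsProbabilityMeasure.ne_zero μ h3

theorem aux_ae_supp (μ : Measure ℝ) : ∀ᵐ x ∂μ, x ∈ msupp μ := by
  rw [ae_iff]
  refine measure_null_of_locally_null _ fun x hx => ?_
  simp only [msupp, mem_ofPred_eq, not_forall, not_lt, nonpos_iff_eq_zero] at hx
  obtain ⟨ε, hε, h0⟩ := hx
  exact ⟨_, mem_nhdsWithin_of_mem_nhds (Ioo_mem_nhds (by linarith) (by linarith)), h0⟩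

theorem aux_nev_im (ν : Measure ℝ) [IsFiniteMeasure ν] (E : ℝ) (w : ℂ) (hw : w ∈ UHP) :
    (ν {E}).toReal * w.im / Complex.normSq (w - E) ≤ (stT ν w).im := by
  rw [aux_im ν w hw, mul_comm, mul_div_assoc]
  refine mul_le_mul_of_nonneg_left ?_ (le_of_lt hw)
  have hi := aux_integrable_sq ν w w.im hw (aux_uhp_ae ν w hw)
  have h1 : ∫ x in {E}, (Complex.normSq ((x : ℂ) - w))⁻¹ ∂ν ≤ Ifun ν w :=
    setIntegral_le_integral hi (Eventually.of_forall fun x => by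
      show (0:ℝ) ≤ _
      exact inv_nonneg.2 (Complex.normSq_nonneg _))
  rw [integral_singleton] at h1
  refine le_trans (le_of_eq ?_) h1
  rw [← Complex.normSq_neg (w - E), neg_sub, div_eq_mul_inv]
  rfl

theorem aux_sigma_pos (μ : Measure ℝ) [IsProbabilityMeasure μ] [NullSingletonClass μ]
    (hx2 : Integrable (fun x : ℝ => x ^ 2) μ) : 0 < ∫ x, x ^ 2 ∂μ := by
  have hnn : ∀ x : ℝ, 0 ≤ x ^ 2 := fun x => sq_nonneg x
  refine lt_of_le_of_ne (integral_nonneg hnn) fun h1 => ?_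
  have h2 := (integral_eq_zero_iff_of_nonneg hnn hx2).1 h1.symm
  have h4 : ∀ᵐ x : ℝ ∂μ, x ≠ 0 := by
    simp [ae_iff]
  have h3 : ∀ᵐ x : ℝ ∂μ, False := by
    filter_upwards [h2, h4] with x hx hx'
    exact hx' (by simpa using hx)
  simp at h3
  exact IsProbabilityMeasure.ne_zero μ h3

theorem aux_kint (μ : Measure ℝ) [IsProbabilityMeasure μ] (w : ℂ)
    (hi : Integrable (fun x : ℝ => ((x : ℂ) - w)⁻¹) μ) (hne : ∀ᵐ x : ℝ ∂μ, (x : ℂ) - w ≠ 0) :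
    ∫ x : ℝ, (x : ℂ) * ((x : ℂ) - w)⁻¹ ∂μ = 1 + w * stT μ w := by
  have : ∀ᵐ x : ℝ ∂μ, (x : ℂ) * ((x : ℂ) - w)⁻¹ = 1 + w * ((x : ℂ) - w)⁻¹ := by
    filter_upwards [hne] with x hx
    field_simp
    ring
  rw [integral_congr_ae this, integral_add (integrable_const _) (hi.const_mul _),
    integral_const_mul, stT]
  simp

theorem aux_bessel (μ : Measure ℝ) [IsProbabilityMeasure μ] [NullSingletonClass μ]
    (hx2 : Integrable (fun x : ℝ => x ^ 2) μ) (hx1 : Integrable (fun x : ℝ => x) μ)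
    (hc : ∫ x, x ∂μ = 0) (w : ℂ) (hw : w ∈ UHP) :
    Complex.normSq (stT μ w) + Complex.normSq (1 + w * stT μ w) / (∫ x, x ^ 2 ∂μ)
      < Ifun μ w := by
  have hσ := aux_sigma_pos μ hx2
  set σ := ∫ x, x ^ 2 ∂μ with hσdef
  have hwim : 0 < w.im := hw
  have hne : ∀ x : ℝ, (x : ℂ) - w ≠ 0 := fun x h => by
    have := congrArg Complex.im h
    simp at this
    linarith
  have hi := aux_integrable μ w w.im hw (aux_uhp_ae μ w hw)
  have hI := aux_integrable_sq μ w w.im hw (aux_uhp_ae μ w hw)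
  set m := stT μ w with hm
  set k := 1 + w * m with hk
  set s : ℂ := k / (σ : ℂ) with hs
  have hnn : ∀ x : ℝ, 0 ≤ Complex.normSq (((x : ℂ) - w)⁻¹ - m - s * x) :=
    fun x => Complex.normSq_nonneg _
  set r : ℂ := (starRingEnd ℂ) m + w * (starRingEnd ℂ) s with hr
  have hexp : ∀ x : ℝ, Complex.normSq (((x : ℂ) - w)⁻¹ - m - s * x) =
      (Complex.normSq ((x : ℂ) - w))⁻¹ + (Complex.normSq m - 2 * s.re) +
        Complex.normSq s * x ^ 2 + 2 * (m * (starRingEnd ℂ) s).re * x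
        - 2 * (((x : ℂ) - w)⁻¹ * r).re := by
    intro x
    have hA : (x : ℂ) * ((x : ℂ) - w)⁻¹ = 1 + w * ((x : ℂ) - w)⁻¹ := by
      have := hne x
      field_simp
      ring
    rw [← map_inv₀]
    generalize ((x : ℂ) - w)⁻¹ = A at hA ⊢
    have e1 : (A * r).re = (A * (starRingEnd ℂ) m).re
        + (((x : ℂ) * A - 1) * (starRingEnd ℂ) s).re := by
      rw [hA, hr, ← Complex.add_re]
      congr 1
      ring
    rw [e1]
    simp only [Complex.normSq_apply, Complex.sub_re, Complex.sub_im, Complex.mul_re,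
      Complex.mul_im, Complex.conj_re, Complex.conj_im, Complex.ofReal_re, Complex.ofReal_im,
      Complex.one_re, Complex.one_im]
    ring
  have hire : Integrable (fun x : ℝ => (((x : ℂ) - w)⁻¹ * r).re) μ :=
    (hi.mul_const r).re
  have e2 : ∫ x : ℝ, (((x : ℂ) - w)⁻¹ * r).re ∂μ = (m * r).re := by
    have := Complex.reCLM.integral_comp_comm (hi.mul_const r)
    simp only [Complex.reCLM_apply] at this
    rw [this, integral_mul_const]
    rfl
  have i1 : Integrable (fun x : ℝ => (Complex.normSq ((x : ℂ) - w))⁻¹ +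
      (Complex.normSq m - 2 * s.re)) μ := hI.add (integrable_const _)
  have i2 : Integrable (fun x : ℝ => (Complex.normSq ((x : ℂ) - w))⁻¹ +
      (Complex.normSq m - 2 * s.re) + Complex.normSq s * x ^ 2) μ := i1.add (hx2.const_mul _)
  have i3 : Integrable (fun x : ℝ => (Complex.normSq ((x : ℂ) - w))⁻¹ +
      (Complex.normSq m - 2 * s.re) + Complex.normSq s * x ^ 2 +
        2 * (m * (starRingEnd ℂ) s).re * x) μ := i2.add (hx1.const_mul _)
  have hint : Integrable (fun x : ℝ => Complex.normSq (((x : ℂ) - w)⁻¹ - m - s * x)) μ := by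
    simp_rw [hexp]
    exact i3.sub (hire.const_mul 2)
  have hval : ∫ x : ℝ, Complex.normSq (((x : ℂ) - w)⁻¹ - m - s * x) ∂μ =
      Ifun μ w - (Complex.normSq m + Complex.normSq k / σ) := by
    simp_rw [hexp]
    rw [integral_sub i3 (hire.const_mul 2), integral_add i2 (hx1.const_mul _),
      integral_add i1 (hx2.const_mul _), integral_add hI (integrable_const _),
      integral_const_mul, integral_const_mul, integral_const_mul, e2, hc, ← hσdef]
    simp only [integral_const, probReal_univ, smul_eq_mul, one_mul, mul_zero, add_zero]
    have hks : k = s * σ := by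
      rw [hs]
      have : (σ : ℂ) ≠ 0 := by exact_mod_cast hσ.ne'
      field_simp
    have e3 : (m * r).re = Complex.normSq m + ((k - 1) * (starRingEnd ℂ) s).re := by
      rw [hr, mul_add, Complex.add_re, Complex.mul_conj, Complex.ofReal_re, hk]
      congr 2
      ring
    have e4 : ((k - 1) * (starRingEnd ℂ) s).re = Complex.normSq s * σ - s.re := by
      rw [hks]
      simp [Complex.normSq_apply]
      ring
    have e5 : Complex.normSq k / σ = Complex.normSq s * σ := by
      rw [hks, map_mul, Complex.normSq_ofReal]
      field_simp
    rw [e3, e4, e5]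
    change Ifun μ w + _ + _ - _ = _
    ring
  have hpos : 0 < ∫ x : ℝ, Complex.normSq (((x : ℂ) - w)⁻¹ - m - s * x) ∂μ := by
    refine lt_of_le_of_ne (integral_nonneg hnn) fun h1 => ?_
    have h2 := (integral_eq_zero_iff_of_nonneg hnn hint).1 h1.symm
    let P : Polynomial ℂ := (Polynomial.X - Polynomial.C w) *
      (Polynomial.C m + Polynomial.C s * Polynomial.X) - 1
    have hP : P ≠ 0 := by
      intro h
      have := congrArg (Polynomial.eval w) h
      simp [P] at this
    have hfin : Set.Finite {x : ℝ | P.IsRoot (x : ℂ)} := by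
      refine Set.Finite.preimage (f := fun x : ℝ => (x : ℂ)) (s := {z | P.IsRoot z})
        (Complex.ofReal_injective.injOn) ?_
      exact Polynomial.finite_setOfPred_isRoot hP
    have h4 : ∀ᵐ x : ℝ ∂μ, ¬ P.IsRoot (x : ℂ) := by
      rw [ae_iff]
      simp only [not_not]
      exact hfin.measure_zero μ
    have h3 : ∀ᵐ x : ℝ ∂μ, False := by
      filter_upwards [h2, h4] with x hx hx'
      apply hx'
      have : ((x : ℂ) - w)⁻¹ - m - s * x = 0 := by simpa using hx
      have h5 : ((x : ℂ) - w) * (((x : ℂ) - w)⁻¹ - m - s * x) = 0 := by rw [this, mul_zero]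
      rw [mul_sub, mul_sub, mul_inv_cancel₀ (hne x)] at h5
      simp only [P, Polynomial.IsRoot, Polynomial.eval_sub, Polynomial.eval_mul,
        Polynomial.eval_X, Polynomial.eval_C, Polynomial.eval_add, Polynomial.eval_one]
      linear_combination -h5
    simp at h3
    exact IsProbabilityMeasure.ne_zero μ h3
  linarith

/-- strict Julia-type inequality for `h = F - id`. -/
theorem aux_h_strict (μ : Measure ℝ) [IsProbabilityMeasure μ] [NullSingletonClass μ]
    (hx2 : Integrable (fun x : ℝ => x ^ 2) μ) (hx1 : Integrable (fun x : ℝ => x) μ)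
    (hc : ∫ x, x ∂μ = 0) (w : ℂ) (hw : w ∈ UHP) :
    Complex.normSq (nrT μ w - w) * w.im < (nrT μ w - w).im * ∫ x, x ^ 2 ∂μ := by
  have hb := aux_bessel μ hx2 hx1 hc w hw
  have hσ := aux_sigma_pos μ hx2
  have him := aux_im μ w hw
  have hwim : 0 < w.im := hw
  have hIp := aux_I_pos μ w w.im hw (aux_uhp_ae μ w hw)
  have hm0 : stT μ w ≠ 0 := fun h => by
    rw [h] at him
    have : 0 < w.im * Ifun μ w := by positivity
    simp at him
    rcases him with h | h <;> linarith
  rw [nrT]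
  set m := stT μ w
  have hN : 0 < Complex.normSq m := Complex.normSq_pos.2 hm0
  have e1 : -m⁻¹ - w = -((1 + w * m) / m) := by field_simp; ring
  have e2 : (-m⁻¹ - w).im = w.im * (Ifun μ w / Complex.normSq m - 1) := by
    rw [Complex.sub_im, Complex.neg_im, Complex.inv_im, him]
    ring
  rw [e2, e1, Complex.normSq_neg, Complex.normSq_div]
  set N := Complex.normSq m
  set K := Complex.normSq (1 + w * m)
  set σ := ∫ x, x ^ 2 ∂μ
  have h1 : K / σ < Ifun μ w - N := by linarith
  rw [div_lt_iff₀ hσ] at h1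
  have h2 : K / N < (Ifun μ w / N - 1) * σ := by
    rw [div_lt_iff₀ hN]
    field_simp
    linarith
  nlinarith

theorem aux_var (μ : Measure ℝ) [IsProbabilityMeasure μ] (w : ℂ) (d : ℝ) (hd : 0 < d)
    (h : ∀ᵐ x : ℝ ∂μ, d ≤ ‖(x : ℂ) - w‖) :
    ∫ x : ℝ, Complex.normSq (((x : ℂ) - w)⁻¹ - stT μ w) ∂μ =
      Ifun μ w - Complex.normSq (stT μ w) := by
  have hi := aux_integrable μ w d hd h
  have hI := aux_integrable_sq μ w d hd h
  set m := stT μ w with hm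
  have hexp : ∀ x : ℝ, Complex.normSq (((x : ℂ) - w)⁻¹ - m) =
      (Complex.normSq ((x : ℂ) - w))⁻¹ + Complex.normSq m
        - 2 * (((x : ℂ) - w)⁻¹ * (starRingEnd ℂ) m).re := by
    intro x
    rw [Complex.normSq_sub, map_inv₀]
  have hire : Integrable (fun x : ℝ => (((x : ℂ) - w)⁻¹ * (starRingEnd ℂ) m).re) μ :=
    (hi.mul_const _).re
  have e2 : ∫ x : ℝ, (((x : ℂ) - w)⁻¹ * (starRingEnd ℂ) m).re ∂μ = Complex.normSq m := by
    have := Complex.reCLM.integral_comp_comm (hi.mul_const ((starRingEnd ℂ) m))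
    simp only [Complex.reCLM_apply] at this
    rw [this, integral_mul_const]
    change (m * _).re = _
    rw [Complex.mul_conj, Complex.ofReal_re]
  have i1 : Integrable (fun x : ℝ => (Complex.normSq ((x : ℂ) - w))⁻¹ +
      Complex.normSq m) μ := hI.add (integrable_const _)
  simp_rw [hexp]
  rw [integral_sub i1 (hire.const_mul 2), integral_add hI (integrable_const _),
      integral_const_mul, e2]
  simp only [integral_const, probReal_univ, smul_eq_mul, one_mul]
  change Ifun μ w + _ - _ = _
  ring

/-- asymptotics at infinity -/
theorem aux_asymp (μ : Measure ℝ) [IsProbabilityMeasure μ] (R : ℝ) (hR : 0 < R)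
    (hsupp : ∀ᵐ x : ℝ ∂μ, |x| ≤ R) (hc : ∫ x, x ∂μ = 0) :
    Tendsto (fun w : ℂ => (Complex.normSq (stT μ w))⁻¹ - (Ifun μ w)⁻¹)
      (comap norm atTop) (𝓝 (∫ x, x ^ 2 ∂μ)) := by
  set l : Filter ℂ := comap norm atTop with hl
  have hnorm : Tendsto (fun w : ℂ => ‖w‖) l atTop := tendsto_comap
  have hlarge : ∀ᶠ w in l, 2 * R ≤ ‖w‖ := hnorm.eventually_ge_atTop _
  have hwpos : ∀ᶠ w in l, 0 < ‖w‖ := hnorm.eventually_gt_atTop _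
  have key : ∀ᶠ w in l, ∀ᵐ x : ℝ ∂μ, ‖w‖ / 2 ≤ ‖(x : ℂ) - w‖ := by
    filter_upwards [hlarge] with w hw
    filter_upwards [hsupp] with x hx
    have h1 : ‖w‖ ≤ ‖(x : ℂ)‖ + ‖(x : ℂ) - w‖ := by
      simpa using norm_sub_le (x : ℂ) ((x : ℂ) - w)
    rw [Complex.norm_real, Real.norm_eq_abs] at h1
    linarith
  have key2 : ∀ᶠ w in l, ∀ᵐ x : ℝ ∂μ, ‖w * ((x : ℂ) - w)⁻¹‖ ≤ 2 := by
    filter_upwards [key, hwpos] with w hw hw0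
    filter_upwards [hw] with x hx
    rw [norm_mul, norm_inv, ← div_eq_mul_inv, div_le_iff₀ (by linarith)]
    linarith
  have hinf : ∀ x : ℝ, Tendsto (fun w : ℂ => (x : ℂ) - w) l (Bornology.cobounded ℂ) := by
    intro x
    rw [← tendsto_norm_atTop_iff_cobounded]
    refine tendsto_atTop_mono (f := fun w : ℂ => -‖(x : ℂ)‖ + ‖w‖) (fun w => ?_)
      (tendsto_atTop_add_const_left _ _ hnorm)
    have h1 : ‖w‖ ≤ ‖(x : ℂ)‖ + ‖(x : ℂ) - w‖ := by
      simpa using norm_sub_le (x : ℂ) ((x : ℂ) - w)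
    linarith
  have hA0 : ∀ x : ℝ, Tendsto (fun w : ℂ => ((x : ℂ) - w)⁻¹) l (𝓝 0) :=
    fun x => tendsto_inv₀_cobounded.comp (hinf x)
  have hwA : ∀ x : ℝ, Tendsto (fun w : ℂ => w * ((x : ℂ) - w)⁻¹) l (𝓝 (-1)) := by
    intro x
    have h1 : Tendsto (fun w : ℂ => (x : ℂ) * ((x : ℂ) - w)⁻¹ - 1) l (𝓝 ((x : ℂ) * 0 - 1)) :=
      ((hA0 x).const_mul _).sub_const 1
    simp only [mul_zero, zero_sub] at h1
    refine h1.congr' ?_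
    have hne : ∀ᶠ w in l, (x : ℂ) - w ≠ 0 := by
      filter_upwards [(tendsto_norm_cobounded_atTop.comp (hinf x)).eventually_gt_atTop 0] with w hw
      exact norm_pos_iff.1 hw
    filter_upwards [hne] with w hw
    field_simp
    ring
  have meas : ∀ w : ℂ, Measurable fun x : ℝ => w * ((x : ℂ) - w)⁻¹ :=
    fun w => (aux_meas w).const_mul w
  -- w m → -1
  have T1 : Tendsto (fun w : ℂ => w * stT μ w) l (𝓝 (-1)) := by
    have : Tendsto (fun w : ℂ => ∫ x : ℝ, w * ((x : ℂ) - w)⁻¹ ∂μ) l (𝓝 (∫ x : ℝ, (-1 : ℂ) ∂μ)) := by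
      refine tendsto_integral_filter_of_dominated_convergence (fun _ => 2) ?_ key2
        (integrable_const _) (Eventually.of_forall hwA)
      exact Eventually.of_forall fun w => (meas w).aestronglyMeasurable
    simpa [integral_const_mul, stT] using this
  have T2 : Tendsto (fun w : ℂ => Complex.normSq w * Ifun μ w) l (𝓝 1) := by
    have : Tendsto (fun w : ℂ => ∫ x : ℝ, Complex.normSq (w * ((x : ℂ) - w)⁻¹) ∂μ) l
        (𝓝 (∫ x : ℝ, (1 : ℝ) ∂μ)) := by
      refine tendsto_integral_filter_of_dominated_convergence (fun _ => 2 ^ 2) ?_ ?_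
        (integrable_const _) (Eventually.of_forall fun x => ?_)
      · exact Eventually.of_forall fun w =>
          (Complex.continuous_normSq.measurable.comp (meas w)).aestronglyMeasurable
      · filter_upwards [key2] with w hw
        filter_upwards [hw] with x hx
        rw [Complex.normSq_eq_norm_sq, Real.norm_of_nonneg (by positivity)]
        gcongr
      · have := (Complex.continuous_normSq.tendsto _).comp (hwA x)
        simpa [Function.comp_def] using this
    simpa [integral_const_mul, Ifun] using this
  have T3 : Tendsto (fun w : ℂ => w * (1 + w * stT μ w)) l (𝓝 0) := by
    have : Tendsto (fun w : ℂ => ∫ x : ℝ, (x : ℂ) * (w * ((x : ℂ) - w)⁻¹) ∂μ) l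
        (𝓝 (∫ x : ℝ, (x : ℂ) * (-1) ∂μ)) := by
      refine tendsto_integral_filter_of_dominated_convergence (fun _ => R * 2) ?_ ?_
        (integrable_const _) (Eventually.of_forall fun x => (hwA x).const_mul _)
      · exact Eventually.of_forall fun w =>
          (Complex.measurable_ofReal.mul (meas w)).aestronglyMeasurable
      · filter_upwards [key2] with w hw
        filter_upwards [hw, hsupp] with x hx hx'
        rw [norm_mul, Complex.norm_real, Real.norm_eq_abs]
        gcongr
    rw [integral_mul_const, integral_complex_ofReal, hc] at this
    simp only [Complex.ofReal_zero, zero_mul] at this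
    refine this.congr' ?_
    filter_upwards [key, hwpos] with w hw hw0
    have hne : ∀ᵐ x : ℝ ∂μ, (x : ℂ) - w ≠ 0 := by
      filter_upwards [hw] with x hx
      exact norm_pos_iff.1 (by linarith)
    rw [← aux_kint μ w (aux_integrable μ w _ (by linarith) hw) hne, ← integral_const_mul]
    congr 1
    ext x
    ring
  have T4 : Tendsto (fun w : ℂ => Complex.normSq w ^ 2 * (Ifun μ w - Complex.normSq (stT μ w))) l
      (𝓝 (∫ x, x ^ 2 ∂μ)) := by
    have hb : ∀ᶠ w in l, ‖w * (1 + w * stT μ w)‖ ≤ 1 := by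
      have := T3.norm
      rw [norm_zero] at this
      exact (this.eventually_lt_const one_pos).mono fun w h => h.le
    have : Tendsto (fun w : ℂ => ∫ x : ℝ,
        Complex.normSq ((x : ℂ) * (w * ((x : ℂ) - w)⁻¹) - w * (1 + w * stT μ w)) ∂μ) l
        (𝓝 (∫ x : ℝ, x ^ 2 ∂μ)) := by
      refine tendsto_integral_filter_of_dominated_convergence (fun _ => (R * 2 + 1) ^ 2) ?_ ?_
        (integrable_const _) (Eventually.of_forall fun x => ?_)
      · exact Eventually.of_forall fun w =>
          (Complex.continuous_normSq.measurable.comp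
            ((Complex.measurable_ofReal.mul (meas w)).sub_const _)).aestronglyMeasurable
      · filter_upwards [key2, hb] with w hw hw1
        filter_upwards [hw, hsupp] with x hx hx'
        rw [Complex.normSq_eq_norm_sq, Real.norm_of_nonneg (by positivity)]
        have h1 : ‖(x : ℂ) * (w * ((x : ℂ) - w)⁻¹)‖ ≤ R * 2 := by
          rw [norm_mul, Complex.norm_real, Real.norm_eq_abs]
          gcongr
        have := norm_sub_le ((x : ℂ) * (w * ((x : ℂ) - w)⁻¹)) (w * (1 + w * stT μ w))
        gcongr
        linarith
      · have := (Complex.continuous_normSq.tendsto _).comp (((hwA x).const_mul (x : ℂ)).sub T3)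
        simpa [← sq, Function.comp_def] using this
    refine this.congr' ?_
    filter_upwards [key, hwpos] with w hw hw0
    rw [← aux_var μ w _ (by linarith) hw, ← integral_const_mul]
    refine integral_congr_ae ?_
    filter_upwards [hw] with x hx
    have hne : (x : ℂ) - w ≠ 0 := norm_pos_iff.1 (by linarith)
    rw [sq, ← map_mul, ← map_mul]
    congr 1
    field_simp
    ring
  have T1' : Tendsto (fun w : ℂ => Complex.normSq w * Complex.normSq (stT μ w)) l (𝓝 1) := by
    have := (Complex.continuous_normSq.tendsto _).comp T1
    simpa [Function.comp_def] using this
  have T5 := T4.div (T2.mul T1') (by norm_num)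
  simp only [mul_one, div_one] at T5
  refine T5.congr' ?_
  filter_upwards [hwpos, T2.eventually_ne one_ne_zero, T1'.eventually_ne one_ne_zero] with w h1 h2 h3
  have h4 := left_ne_zero_of_mul h2
  have h5 := right_ne_zero_of_mul h2
  have h6 := right_ne_zero_of_mul h3
  simp only [Pi.div_apply]
  field_simp

theorem aux_not_supp (μ : Measure ℝ) [IsFiniteMeasure μ] (E δ C : ℝ) (hδ : 0 < δ)
    (h : ∀ x η : ℝ, |x - E| < δ → 0 < η → η < δ → Ifun μ (x + η * Complex.I) ≤ C) :
    E ∉ msupp μ := by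
  have h1 : ∀ x η : ℝ, |x - E| < δ → 0 < η → η < δ →
      μ.real (Icc (x - η) (x + η)) ≤ 2 * C * η ^ 2 := by
    intro x η hx hη hη'
    have hw : (x + η * Complex.I : ℂ) ∈ UHP := by simpa [UHP] using hη
    have hI := aux_integrable_sq μ _ _ hw (aux_uhp_ae μ _ hw)
    have h2 : ∫ y in Icc (x - η) (x + η), (2 * η ^ 2)⁻¹ ∂μ ≤ Ifun μ (x + η * Complex.I) := by
      refine le_trans (setIntegral_mono_on (integrable_const _).integrableOn hI.integrableOn
        measurableSet_Icc ?_) (setIntegral_le_integral hI (Eventually.of_forall fun y => by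
          show (0:ℝ) ≤ _
          exact inv_nonneg.2 (Complex.normSq_nonneg _)))
      intro y hy
      have e : Complex.normSq ((y : ℂ) - (x + η * Complex.I)) = (y - x) ^ 2 + η ^ 2 := by
        simp [Complex.normSq_apply]
        ring
      rw [e]
      refine inv_anti₀ (by positivity) ?_
      have : (y - x) ^ 2 ≤ η ^ 2 := sq_le_sq' (by linarith [hy.1]) (by linarith [hy.2])
      linarith
    have h3 := h2.trans (h x η hx hη hη')
    simp only [setIntegral_const, smul_eq_mul] at h3
    rw [← div_eq_mul_inv, div_le_iff₀ (by positivity)] at h3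
    linarith
  have hcover : ∀ N : ℕ, 2 ≤ N → μ.real (Ioo (E - δ / 2) (E + δ / 2)) ≤ 2 * C * δ ^ 2 / N := by
    intro N hN
    have hN0 : (0:ℝ) < N := by positivity
    set η : ℝ := δ / N with hη
    have hNη : N * η = δ := by rw [hη]; field_simp
    have hη0 : 0 < η := by positivity
    have hηδ : η < δ := by
      rw [hη]
      refine div_lt_self hδ ?_
      exact_mod_cast hN
    let X : ℕ → ℝ := fun j => E - δ / 2 + j * η
    have hsub : Ioo (E - δ / 2) (E + δ / 2) ⊆
        ⋃ j ∈ Finset.range N, Icc (X j - η) (X j + η) := by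
      intro y hy
      have hy0 : 0 ≤ (y - (E - δ / 2)) / η := div_nonneg (by linarith [hy.1]) hη0.le
      have f1 := Nat.floor_le hy0
      have f2 := Nat.lt_floor_add_one ((y - (E - δ / 2)) / η)
      rw [le_div_iff₀ hη0] at f1
      rw [div_lt_iff₀ hη0] at f2
      simp only [mem_iUnion, Finset.mem_range]
      refine ⟨⌊(y - (E - δ / 2)) / η⌋₊, ?_, ?_, ?_⟩
      · rw [Nat.floor_lt hy0, div_lt_iff₀ hη0, hNη]
        linarith [hy.2]
      · simp only [X]
        linarith
      · simp only [X]
        linarith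
    calc μ.real (Ioo (E - δ / 2) (E + δ / 2))
        ≤ μ.real (⋃ j ∈ Finset.range N, Icc (X j - η) (X j + η)) := 
          measureReal_mono hsub (measure_ne_top _ _)
      _ ≤ ∑ j ∈ Finset.range N, μ.real (Icc (X j - η) (X j + η)) :=
          measureReal_biUnion_finset_le _ _
      _ ≤ ∑ j ∈ Finset.range N, 2 * C * η ^ 2 := by
          refine Finset.sum_le_sum fun j hj => h1 _ _ ?_ hη0 hηδ
          have hj' : (j : ℝ) < N := by exact_mod_cast Finset.mem_range.1 hj
          have : (j : ℝ) * η < δ := by rw [← hNη]; gcongr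
          have : 0 ≤ (j : ℝ) * η := by positivity
          simp only [X]
          rw [abs_lt]
          constructor <;> linarith
      _ = 2 * C * δ ^ 2 / N := by
          rw [Finset.sum_const, Finset.card_range, nsmul_eq_mul, hη]
          field_simp
  have hlim : Tendsto (fun N : ℕ => 2 * C * δ ^ 2 / N) atTop (𝓝 0) :=
    tendsto_const_div_atTop_nhds_zero_nat _
  have h0 : μ.real (Ioo (E - δ / 2) (E + δ / 2)) ≤ 0 :=
    ge_of_tendsto hlim ((eventually_ge_atTop 2).mono hcover)
  intro hmem
  have := hmem (δ / 2) (half_pos hδ)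
  have h4 : μ.real (Ioo (E - δ / 2) (E + δ / 2)) = 0 := le_antisymm h0 measureReal_nonneg
  rw [measureReal_eq_zero_iff] at h4
  exact this.ne' h4

/-- the mass of the atom is the inverse of the derivative of `m`. -/
theorem aux_p (μ ν : Measure ℝ) [IsProbabilityMeasure μ] [IsFiniteMeasure ν] (E d : ℝ) (hd : 0 < d)
    (h : ∀ᵐ x : ℝ ∂μ, d ≤ |x - E|) (h0 : stT μ E = 0)
    (hn : ∀ z ∈ UHP, nrT μ z - z = stT ν z) :
    (ν {E}).toReal * Ifun μ E = 1 := by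
  set l : Filter ℝ := 𝓝[>] 0 with hl
  have hd' : ∀ᵐ x : ℝ ∂μ, d ≤ ‖(x : ℂ) - E‖ := by
    filter_upwards [h] with x hx
    rw [← Complex.ofReal_sub, Complex.norm_real]
    exact hx
  have hpos : ∀ᶠ η : ℝ in l, 0 < η := self_mem_nhdsWithin
  have ht0 : Tendsto (fun η : ℝ => (η * Complex.I : ℂ)) l (𝓝 0) := by
    have : Continuous fun η : ℝ => (η * Complex.I : ℂ) := by fun_prop
    have := (this.tendsto 0).mono_left (nhdsWithin_le_nhds : l ≤ 𝓝 0)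
    simpa using this
  have hneim : ∀ η : ℝ, 0 < η → ∀ x : ℝ, (x : ℂ) - (E + η * Complex.I) ≠ 0 := fun η hη x h => by
    have := congrArg Complex.im h
    simp at this
    linarith
  have S1 : Tendsto (fun η : ℝ => stT μ (E + η * Complex.I) / (η * Complex.I)) l
      (𝓝 (Ifun μ E : ℂ)) := by
    have : Tendsto (fun η : ℝ => ∫ x : ℝ, ((x : ℂ) - (E + η * Complex.I))⁻¹ * ((x : ℂ) - E)⁻¹ ∂μ) l
        (𝓝 (∫ x : ℝ, (((Complex.normSq ((x : ℂ) - E))⁻¹ : ℝ) : ℂ) ∂μ)) := by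
      refine tendsto_integral_filter_of_dominated_convergence (fun _ => d⁻¹ * d⁻¹) ?_ ?_
        (integrable_const _) ?_
      · exact Eventually.of_forall fun η =>
          ((aux_meas _).mul (aux_meas _)).aestronglyMeasurable
      · refine Eventually.of_forall fun η => ?_
        filter_upwards [hd', h] with x hx hx'
        rw [norm_mul, norm_inv, norm_inv]
        have : d ≤ ‖(x : ℂ) - (E + η * Complex.I)‖ := by
          refine hx'.trans ?_
          have := Complex.abs_re_le_norm ((x : ℂ) - (E + η * Complex.I))
          simpa using this
        gcongr
      · filter_upwards [hd'] with x hx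
        have hne : (x : ℂ) - E ≠ 0 := norm_pos_iff.1 (by linarith)
        have t1 : Tendsto (fun η : ℝ => (x : ℂ) - (E + η * Complex.I)) l
            (𝓝 ((x : ℂ) - (E + 0))) := (ht0.const_add _).const_sub _
        rw [add_zero] at t1
        have t2 := (t1.inv₀ hne).mul_const ((x : ℂ) - E)⁻¹
        convert t2 using 2
        rw [← Complex.ofReal_sub, Complex.normSq_ofReal]
        push_cast
        rw [mul_inv]
    rw [integral_complex_ofReal] at this
    refine this.congr' ?_
    filter_upwards [hpos] with η hη
    have hI : (η * Complex.I : ℂ) ≠ 0 := by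
      simp [hη.ne']
    have hw : (E + η * Complex.I : ℂ) ∈ UHP := by simpa [UHP] using hη
    rw [eq_div_iff hI, ← integral_mul_const, ← sub_zero (stT μ (E + η * Complex.I)), ← h0, stT, stT,
      ← integral_sub (aux_integrable μ _ _ hw (aux_uhp_ae μ _ hw)) (aux_integrable μ _ _ hd hd')]
    refine integral_congr_ae ?_
    filter_upwards [hd'] with x hx
    have hne : (x : ℂ) - E ≠ 0 := norm_pos_iff.1 (by linarith)
    have hne' := hneim η hη x
    field_simp
    ring
  have S2 : Tendsto (fun η : ℝ => (η * Complex.I) * stT ν (E + η * Complex.I)) l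
      (𝓝 (-((ν {E}).toReal : ℂ))) := by
    have : Tendsto (fun η : ℝ => ∫ x : ℝ, (η * Complex.I) * ((x : ℂ) - (E + η * Complex.I))⁻¹ ∂ν) l
        (𝓝 (∫ x : ℝ, ({E} : Set ℝ).indicator (fun _ => (-1 : ℂ)) x ∂ν)) := by
      refine tendsto_integral_filter_of_dominated_convergence (fun _ => 1) ?_ ?_
        (integrable_const _) ?_
      · exact Eventually.of_forall fun η =>
          ((aux_meas _).const_mul _).aestronglyMeasurable
      · filter_upwards [hpos] with η hη
        refine Eventually.of_forall fun x => ?_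
        have h1 := aux_im_le x (E + η * Complex.I)
        have h2 : ‖(η * Complex.I : ℂ)‖ = |η| := by simp
        rw [norm_mul, norm_inv, h2, ← div_eq_mul_inv]
        rw [div_le_one (norm_pos_iff.2 (hneim η hη x))]
        simpa using h1
      · refine Eventually.of_forall fun x => ?_
        by_cases hx : x = E
        · subst hx
          simp only [mem_singleton_iff, indicator_of_mem]
          refine tendsto_const_nhds.congr' ?_
          filter_upwards [hpos] with η hη
          have : (η : ℂ) ≠ 0 := by exact_mod_cast hη.ne'
          rw [sub_add_cancel_left]
          field_simp
        · rw [indicator_of_notMem (by simpa using hx)]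
          have hne : (x : ℂ) - E ≠ 0 := by
            rw [sub_ne_zero]
            exact_mod_cast hx
          have t1 : Tendsto (fun η : ℝ => (x : ℂ) - (E + η * Complex.I)) l
            (𝓝 ((x : ℂ) - (E + 0))) := (ht0.const_add _).const_sub _
          rw [add_zero] at t1
          simpa using ht0.mul (t1.inv₀ hne)
    rw [integral_indicator (measurableSet_singleton E), setIntegral_const] at this
    simpa [integral_const_mul, stT, measureReal_def] using this
  have S3 : Tendsto (fun η : ℝ => (η * Complex.I) * nrT μ (E + η * Complex.I)) l
      (𝓝 (-((ν {E}).toReal : ℂ))) := by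
    have t := S2.add (ht0.mul (ht0.const_add (E : ℂ)))
    simp only [zero_mul, add_zero] at t
    refine t.congr' ?_
    filter_upwards [hpos] with η hη
    have hw : (E + η * Complex.I : ℂ) ∈ UHP := by simpa [UHP] using hη
    rw [← hn _ hw]
    ring
  have S4 := S3.mul S1
  have S5 : Tendsto (fun η : ℝ => (η * Complex.I) * nrT μ (E + η * Complex.I) *
      (stT μ (E + η * Complex.I) / (η * Complex.I))) l (𝓝 (-1)) := by
    refine tendsto_const_nhds.congr' ?_
    filter_upwards [hpos] with η hη
    have hw : (E + η * Complex.I : ℂ) ∈ UHP := by simpa [UHP] using hη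
    have hη' : (η : ℂ) ≠ 0 := by exact_mod_cast hη.ne'
    have hm0 : stT μ (E + η * Complex.I) ≠ 0 := fun h => by
      have him := aux_im μ _ hw
      have hIp := aux_I_pos μ _ _ hw (aux_uhp_ae μ _ hw)
      have hw' : 0 < (E + η * Complex.I : ℂ).im := hw
      have := mul_pos hw' hIp
      rw [← him, h] at this
      simp at this
    rw [nrT]
    field_simp
  have := tendsto_nhds_unique S4 S5
  have h7 : (((ν {E}).toReal * Ifun μ E : ℝ) : ℂ) = ((1 : ℝ) : ℂ) := by
    push_cast
    linear_combination -this
  exact_mod_cast h7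

theorem aux_sub : UHP ⊆ CUHP := by
  intro z hz
  have h : 0 < z.im := hz
  have h' : 0 ≤ z.im := h.le
  exact h'

theorem aux_m_ne (μ : Measure ℝ) [IsProbabilityMeasure μ] (w : ℂ) (hw : w ∈ UHP) :
    0 < (stT μ w).im := by
  rw [aux_im μ w hw]
  exact mul_pos hw (aux_I_pos μ w w.im hw (aux_uhp_ae μ w hw))

theorem aux_nr_cont (μ : Measure ℝ) [IsProbabilityMeasure μ] (w : ℂ) (hw : w ∈ UHP) :
    ContinuousAt (nrT μ) w := by
  have h := (aux_cont μ w w.im hw (aux_uhp_ae μ w hw)).1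
  have h0 : stT μ w ≠ 0 := fun h => by
    have := aux_m_ne μ w hw
    rw [h] at this
    simp at this
  exact (h.inv₀ h0).neg

theorem aux_key_limit (μa μb : Measure ℝ) [IsProbabilityMeasure μa] [IsProbabilityMeasure μb]
    (ωa ωb : ℂ → ℂ) (hsub : IsSubordPair μa μb ωa ωb) (E d R p : ℝ) (hd : 0 < d) (hR : 0 < R)
    (hE : ∀ᵐ x : ℝ ∂μa, d ≤ ‖(x : ℂ) - (E : ℂ)‖) (h0 : stT μa E = 0)
    (hp : p * Ifun μa E = 1)
    (hsupp : ∀ᵐ x : ℝ ∂μb, |x| ≤ R) (hc : ∫ x, x ∂μb = 0) (z₀ : ℂ)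
    (hlim : Tendsto ωb (𝓝[UHP] z₀) (𝓝 (E : ℂ))) :
    Tendsto (fun z => z.im / (stT μa (ωb z)).im) (𝓝[UHP] z₀) (𝓝 (p - ∫ x, x ^ 2 ∂μb)) := by
  have hU : ∀ᶠ z in 𝓝[UHP] z₀, z ∈ UHP := self_mem_nhdsWithin
  have hz : Tendsto (fun z : ℂ => z) (𝓝[UHP] z₀) (𝓝 z₀) := tendsto_id.mono_left nhdsWithin_le_nhds
  obtain ⟨c1, c2⟩ := aux_cont μa E d hd hE
  have hIp := aux_I_pos μa E d hd hE
  have hM0 : Tendsto (fun z => stT μa (ωb z)) (𝓝[UHP] z₀) (𝓝 0) := by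
    have := c1.tendsto.comp hlim
    rwa [h0] at this
  have hIa : Tendsto (fun z => (Ifun μa (ωb z))⁻¹) (𝓝[UHP] z₀) (𝓝 p) := by
    have := (c2.tendsto.comp hlim).inv₀ hIp.ne'
    have e : p = (Ifun μa E)⁻¹ := eq_inv_of_mul_eq_one_left hp
    rw [e]
    exact this
  have hne : ∀ z ∈ UHP, stT μa (ωb z) ≠ 0 := fun z hz h => by
    have := aux_m_ne μa _ (hsub.maps_b z hz)
    rw [h] at this
    simp at this
  have heq : ∀ z ∈ UHP, stT μa (ωb z) = stT μb (ωa z) := fun z hz => by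
    have h1 := (hsub.eqn_a z hz).symm.trans (hsub.eqn_b z hz)
    rw [nrT, nrT] at h1
    exact inv_injective (neg_injective h1)
  have hMinv : Tendsto (fun z => ‖(stT μa (ωb z))⁻¹‖) (𝓝[UHP] z₀) atTop := by
    refine tendsto_norm_cobounded_atTop.comp ?_
    refine tendsto_inv₀_nhdsNE_zero.comp ?_
    exact tendsto_nhdsWithin_iff.2 ⟨hM0, hU.mono hne⟩
  have ha : Tendsto (fun z => ωa z) (𝓝[UHP] z₀) (comap norm atTop) := by
    rw [tendsto_comap_iff]
    have hbd : Tendsto (fun z => -‖z - ωb z‖) (𝓝[UHP] z₀) (𝓝 (-‖z₀ - E‖)) :=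
      (hz.sub hlim).norm.neg
    refine tendsto_atTop_mono' _ ?_ (hbd.add_atTop hMinv)
    filter_upwards [hU] with z hzU
    have h1 := hsub.eqn_a z hzU
    rw [nrT] at h1
    have h2 : (stT μa (ωb z))⁻¹ = (z - ωb z) - ωa z := by linear_combination h1
    have h3 := norm_sub_le (z - ωb z) (ωa z)
    rw [← h2] at h3
    simp only [Function.comp_apply]
    linarith
  have hb := (aux_asymp μb R hR hsupp hc).comp ha
  refine (hIa.sub hb).congr' ?_
  filter_upwards [hU] with z hzU
  have h1 := hsub.eqn_a z hzU
  have h2 := aux_im μa _ (hsub.maps_b z hzU)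
  have h3 := aux_im μb _ (hsub.maps_a z hzU)
  have h4 := aux_I_pos μa _ _ (hsub.maps_b z hzU) (aux_uhp_ae μa _ (hsub.maps_b z hzU))
  have h5 := aux_I_pos μb _ _ (hsub.maps_a z hzU) (aux_uhp_ae μb _ (hsub.maps_a z hzU))
  have h6 := aux_m_ne μa _ (hsub.maps_b z hzU)
  have hN := Complex.normSq_pos.2 (hne z hzU)
  simp only [Function.comp_apply]
  rw [← heq z hzU] at h3 ⊢
  have h7 := congrArg Complex.im h1
  rw [nrT, Complex.neg_im, Complex.inv_im, Complex.sub_im, Complex.add_im] at h7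
  rw [eq_div_iff h6.ne']
  have e1 : (ωb z).im = (stT μa (ωb z)).im * (Ifun μa (ωb z))⁻¹ := by
    rw [h2]; field_simp
  have e2 : (ωa z).im = (stT μa (ωb z)).im * (Ifun μb (ωa z))⁻¹ := by
    rw [h3]; field_simp
  rw [neg_div, neg_neg, div_eq_mul_inv] at h7
  linear_combination h7 - e1 - e2

theorem aux_lim_of_ext (ω : ℂ → ℂ) (Ω : ℂ → OnePoint ℂ) (h : ExtendsToRP ω Ω) (z₀ c : ℂ)
    (hz₀ : z₀.im = 0) (hc : Ω z₀ = (c : OnePoint ℂ)) :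
    Tendsto ω (𝓝[UHP] z₀) (𝓝 c) := by
  have h1 : Tendsto Ω (𝓝[CUHP] z₀) (𝓝 (Ω z₀)) := h.1 z₀ (by simp [CUHP, hz₀])
  have h2 : Tendsto Ω (𝓝[UHP] z₀) (𝓝 (Ω z₀)) :=
    h1.mono_left (nhdsWithin_mono _ aux_sub)
  rw [hc] at h2
  rw [OnePoint.isOpenEmbedding_coe.isInducing.tendsto_nhds_iff]
  refine h2.congr' ?_
  filter_upwards [self_mem_nhdsWithin] with z hz
  exact h.2 z hz

theorem aux_nebot (z₀ : ℂ) (hz₀ : z₀.im = 0) : (𝓝[UHP] z₀).NeBot := by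
  rw [← mem_closure_iff_nhdsWithin_neBot, UHP, Complex.closure_setOfPred_lt_im]
  exact hz₀.ge

theorem aux_fix (μa μb ν : Measure ℝ) [IsProbabilityMeasure μa] [IsProbabilityMeasure μb]
    [IsFiniteMeasure ν] [NullSingletonClass μb]
    (hx2 : Integrable (fun x : ℝ => x ^ 2) μb) (hx1 : Integrable (fun x : ℝ => x) μb)
    (hc : ∫ x, x ∂μb = 0)
    (hn : ∀ z ∈ UHP, nrT μa z - z = stT ν z)
    (ωa ωb : ℂ → ℂ) (hsub : IsSubordPair μa μb ωa ωb)
    (Ωb : ℂ → OnePoint ℂ) (hΩb : ExtendsToRP ωb Ωb) (E : ℝ) (hp : 0 < (ν {E}).toReal)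
    (hle : (∫ x, x ^ 2 ∂μb) ≤ (ν {E}).toReal) :
    Ωb (E : ℂ) = ((E : ℂ) : OnePoint ℂ) := by
  set p := (ν {E}).toReal with hpdef
  set σ := ∫ x, x ^ 2 ∂μb with hσdef
  set l : Filter ℝ := 𝓝[>] 0 with hl
  let Z : ℝ → ℂ := fun η => E + η * Complex.I
  have hpos : ∀ᶠ η : ℝ in l, 0 < η := self_mem_nhdsWithin
  have hZU : ∀ η : ℝ, 0 < η → Z η ∈ UHP := fun η hη => by simpa [UHP, Z] using hη
  have hZ : Tendsto Z l (𝓝 (E : ℂ)) := by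
    have : Continuous Z := by fun_prop
    have := (this.tendsto 0).mono_left (nhdsWithin_le_nhds : l ≤ 𝓝 0)
    simpa [Z] using this
  have hZw : Tendsto Z l (𝓝[UHP] (E : ℂ)) := tendsto_nhdsWithin_iff.2 ⟨hZ, hpos.mono hZU⟩
  -- the basic inequality
  have ineq : ∀ η : ℝ, 0 < η →
      ((ωb (Z η)).re - E) ^ 2 ≤ (ωb (Z η)).im ^ 2 ∧ Complex.normSq (ωb (Z η) - Z η) ≤ p := by
    intro η hη
    have hz := hZU η hη
    have h1 := aux_h_strict μb hx2 hx1 hc _ (hsub.maps_a _ hz)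
    rw [← hsub.eqn_b _ hz, ← hσdef] at h1
    have h2 := aux_nev_im ν E _ (hsub.maps_b _ hz)
    rw [← hn _ (hsub.maps_b _ hz), ← hsub.eqn_a _ hz, ← hpdef] at h2
    have hb := hsub.imLe_b _ hz
    set b := ωb (Z η)
    set a := ωa (Z η)
    have hzim : (Z η).im = η := by simp [Z]
    have hzre : (Z η).re = E := by simp [Z]
    have e1 : a + b - Z η - a = b - Z η := by ring
    have e2 : a + b - Z η - b = a - Z η := by ring
    rw [e1] at h1
    rw [e2] at h2
    have q1 : Complex.normSq (b - Z η) = (b.re - E) ^ 2 + (b.im - η) ^ 2 := by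
      rw [Complex.normSq_apply, Complex.sub_re, Complex.sub_im, hzim, hzre]
      ring
    have q2 : Complex.normSq (b - E) = (b.re - E) ^ 2 + b.im ^ 2 := by
      rw [Complex.normSq_apply, Complex.sub_re, Complex.sub_im, Complex.ofReal_re,
        Complex.ofReal_im]
      ring
    rw [Complex.sub_im, hzim] at h1 h2
    rw [q2] at h2
    rw [q1] at h1 ⊢
    rw [hzim] at hb
    generalize b.re - E = u at *
    generalize b.im = v at *
    generalize a.im = t at *
    have hv : 0 < v := hη.trans_le hb
    have hD : 0 < u ^ 2 + v ^ 2 := by positivity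
    rw [div_le_iff₀ hD] at h2
    have hQ : 0 ≤ u ^ 2 + (v - η) ^ 2 := by positivity
    have h3 : (v - η) * σ ≤ (v - η) * p := mul_le_mul_of_nonneg_left hle (by linarith)
    have h4 : (u ^ 2 + (v - η) ^ 2) * t * (u ^ 2 + v ^ 2) ≤ (v - η) * p * (u ^ 2 + v ^ 2) :=
      mul_le_mul_of_nonneg_right (by linarith) hD.le
    have h5 : (u ^ 2 + (v - η) ^ 2) * (p * v) ≤
        (u ^ 2 + (v - η) ^ 2) * ((t - η) * (u ^ 2 + v ^ 2)) := mul_le_mul_of_nonneg_left h2 hQ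
    have h6 : η * ((u ^ 2 + (v - η) ^ 2) * (u ^ 2 + v ^ 2) + p * (u ^ 2 - v ^ 2 + v * η)) ≤ 0 := by
      nlinarith
    have h7 : (u ^ 2 + (v - η) ^ 2) * (u ^ 2 + v ^ 2) + p * (u ^ 2 - v ^ 2 + v * η) ≤ 0 := by
      by_contra hcon
      push Not at hcon
      have := mul_pos hη hcon
      linarith
    have hvη : 0 < v * η := mul_pos hv hη
    have hQD : 0 ≤ (u ^ 2 + (v - η) ^ 2) * (u ^ 2 + v ^ 2) := mul_nonneg hQ hD.le
    constructor
    · by_contra hcon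
      push Not at hcon
      have : 0 < p * (u ^ 2 - v ^ 2 + v * η) := mul_pos hp (by linarith)
      linarith
    · refine le_of_mul_le_mul_right ?_ hD
      have h8 : 0 ≤ p * (2 * u ^ 2 + v * η) := by positivity
      nlinarith
  have hΩlim : Tendsto (fun η => ((ωb (Z η) : ℂ) : OnePoint ℂ)) l (𝓝 (Ωb E)) := by
    have h1 : Tendsto Ωb (𝓝[CUHP] (E : ℂ)) (𝓝 (Ωb E)) := hΩb.1 E (by simp [CUHP])
    have h2 : Tendsto Ωb (𝓝[UHP] (E : ℂ)) (𝓝 (Ωb E)) :=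
      h1.mono_left (nhdsWithin_mono _ aux_sub)
    refine (h2.comp hZw).congr' ?_
    filter_upwards [hpos] with η hη
    exact hΩb.2 _ (hZU η hη)
  obtain ⟨b₀, hb₀⟩ : ∃ b₀ : ℂ, Ωb E = (b₀ : OnePoint ℂ) := by
    have hclosed : IsClosed (Set.image (fun z : ℂ => (z : OnePoint ℂ))
        (Metric.closedBall (E : ℂ) (Real.sqrt p + 1))) :=
      ((isCompact_closedBall _ _).image OnePoint.continuous_coe).isClosed
    have hmem := hclosed.mem_of_tendsto hΩlim (by
      have hlt : ∀ᶠ η : ℝ in l, η < 1 := nhdsWithin_le_nhds (Iio_mem_nhds one_pos)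
      filter_upwards [hpos, hlt] with η hη hη1
      refine mem_image_of_mem _ ?_
      rw [Metric.mem_closedBall, dist_eq_norm]
      have h1 := (ineq η hη).2
      rw [Complex.normSq_eq_norm_sq] at h1
      have h2 := Real.le_sqrt_of_sq_le h1
      have h3 : ‖Z η - E‖ ≤ 1 := by
        simp [Z, abs_of_pos hη, hη1.le]
      have h4 : ‖ωb (Z η) - E‖ ≤ ‖ωb (Z η) - Z η‖ + ‖Z η - E‖ := by
        simpa using norm_add_le (ωb (Z η) - Z η) (Z η - E)
      linarith)
    obtain ⟨b₀, -, h⟩ := hmem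
    exact ⟨b₀, h.symm⟩
  have hb : Tendsto (fun η => ωb (Z η)) l (𝓝 b₀) :=
    (aux_lim_of_ext ωb Ωb hΩb E b₀ (by simp) hb₀).comp hZw
  have hbre : Tendsto (fun η => ((ωb (Z η)).re - E) ^ 2) l (𝓝 ((b₀.re - E) ^ 2)) :=
    (((Complex.continuous_re.tendsto _).comp hb).sub_const E).pow 2
  have hbim : Tendsto (fun η => (ωb (Z η)).im) l (𝓝 b₀.im) :=
    (Complex.continuous_im.tendsto _).comp hb
  have hle2 : (b₀.re - E) ^ 2 ≤ b₀.im ^ 2 :=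
    le_of_tendsto_of_tendsto hbre (hbim.pow 2) (hpos.mono fun η hη => (ineq η hη).1)
  have him0 : 0 ≤ b₀.im :=
    ge_of_tendsto hbim (hpos.mono fun η hη => le_of_lt (hsub.maps_b _ (hZU η hη)))
  rw [hb₀]
  rcases him0.eq_or_lt with h | h
  · rw [← h] at hle2
    have h1 : b₀.re - E = 0 := by nlinarith
    congr 1
    apply Complex.ext
    · simp; linarith
    · simp [← h]
  · exfalso
    have hbU : b₀ ∈ UHP := h
    set a₀ : ℂ := nrT μa b₀ - b₀ + E with ha₀
    have ha : Tendsto (fun η => ωa (Z η)) l (𝓝 a₀) := by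
      have t := ((((aux_nr_cont μa b₀ hbU).tendsto.comp hb).sub hb).add hZ)
      refine t.congr' ?_
      filter_upwards [hpos] with η hη
      have := hsub.eqn_a _ (hZU η hη)
      simp only [Function.comp_apply]
      rw [← this]
      ring
    have him : a₀.im = (stT ν b₀).im := by
      rw [ha₀, hn _ hbU]
      simp
    have h2 := aux_nev_im ν E b₀ hbU
    rw [← him, ← hpdef] at h2
    have hD : 0 < Complex.normSq (b₀ - E) := by
      refine Complex.normSq_pos.2 fun h' => ?_
      have := congrArg Complex.im h'
      simp at this
      linarith
    have haU : a₀ ∈ UHP := lt_of_lt_of_le (by positivity) h2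
    have hF : nrT μb a₀ = a₀ + b₀ - E := by
      have t1 := (aux_nr_cont μb a₀ haU).tendsto.comp ha
      have t2 := (ha.add hb).sub hZ
      refine tendsto_nhds_unique t1 (t2.congr' ?_)
      filter_upwards [hpos] with η hη
      exact hsub.eqn_b _ (hZU η hη)
    have h1 := aux_h_strict μb hx2 hx1 hc _ haU
    have e1 : a₀ + b₀ - E - a₀ = b₀ - E := by ring
    rw [hF, e1, ← hσdef, Complex.sub_im, Complex.ofReal_im, sub_zero] at h1
    rw [div_le_iff₀ hD] at h2
    have h3 : b₀.im * σ ≤ b₀.im * p := mul_le_mul_of_nonneg_left hle h.le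
    linarith

/-- Whether an atom `E^α` of `μ̂_α` belongs to the range on ℝ of the
continuous extension of `ω_β` is decided by comparing `∫ x² dμ_β` with `μ̂_α({E^α})`. -/
theorem atom_in_range_of_subordination
    (μa μb μab μhata : Measure ℝ) (na nb : ℕ)
    (Am Ap : Fin na → ℝ) (Bm Bp : Fin nb → ℝ) (ρa ρb : ℝ → ℝ)
    (hμa : Assumption2 μa na Am Ap ρa)
    (hμb : Assumption2 μb nb Bm Bp ρb)
    (hhata : IsNevanHat μa μhata)
    (ωa ωb : ℂ → ℂ) (hsub : IsSubordPair μa μb ωa ωb)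
    (hconv : IsFreeConv μa μb ωb μab)
    (Ωa Ωb : ℂ → OnePoint ℂ)
    (hΩa : ExtendsToRP ωa Ωa) (hΩb : ExtendsToRP ωb Ωb)
    -- E^α: an atom of μ̂_α, i.e. a zero of m_{μ_α} at positive distance from supp(μ_α)
    (Eα : ℝ) (hEα₁ : 0 < Metric.infDist Eα (msupp μa))
    (hEα₂ : stTR μa Eα = 0) (hEα₃ : μhata {Eα} ≠ 0) :
    ((∫ x, x ^ 2 ∂μb) > (μhata {Eα}).toReal →
      ¬ ∃ z : ℂ, z.im = 0 ∧ Ωb z = ((Eα : ℂ) : OnePoint ℂ)) ∧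
    ((∫ x, x ^ 2 ∂μb) < (μhata {Eα}).toReal →
      (∃ z : ℂ, z.im = 0 ∧ Ωb z = ((Eα : ℂ) : OnePoint ℂ)) ∧ Eα ∉ msupp μab) ∧
    ((∫ x, x ^ 2 ∂μb) = (μhata {Eα}).toReal →
      ∃ z : ℂ, z.im = 0 ∧ Ωb z = ((Eα : ℂ) : OnePoint ℂ)) := by
  have := hμa.prob
  have := hμb.prob
  have := hhata.1
  have := hconv.1
  have : NullSingletonClass μb := by
    rw [hμb.ac]
    infer_instance
  have hc := hμb.centered
  obtain ⟨R, hR, hsupp⟩ : ∃ R : ℝ, 0 < R ∧ ∀ᵐ x : ℝ ∂μb, |x| ≤ R := by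
    have hbd : Bornology.IsBounded (msupp μb) := by
      rw [hμb.supp_eq]
      exact (isCompact_iUnion fun j => isCompact_Icc).isBounded
    obtain ⟨R, hR, h⟩ := hbd.exists_pos_norm_le
    refine ⟨R, hR, ?_⟩
    filter_upwards [aux_ae_supp μb] with x hx
    exact h x hx
  have hx1 : Integrable (fun x : ℝ => x) μb :=
    Integrable.of_bound measurable_id.aestronglyMeasurable R hsupp
  have hx2 : Integrable (fun x : ℝ => x ^ 2) μb := by
    refine Integrable.of_bound (measurable_id.pow_const 2).aestronglyMeasurable (R ^ 2) ?_
    filter_upwards [hsupp] with x hx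
    rw [norm_pow, Real.norm_eq_abs]
    gcongr
  have hdR : ∀ᵐ x : ℝ ∂μa, Metric.infDist Eα (msupp μa) ≤ |x - Eα| := by
    filter_upwards [aux_ae_supp μa] with x hx
    have := Metric.infDist_le_dist_of_mem (x := Eα) hx
    rwa [dist_comm, Real.dist_eq] at this
  have hdC : ∀ᵐ x : ℝ ∂μa, Metric.infDist Eα (msupp μa) ≤ ‖(x : ℂ) - (Eα : ℂ)‖ := by
    filter_upwards [hdR] with x hx
    rwa [← Complex.ofReal_sub, Complex.norm_real]
  have h0 : stT μa (Eα : ℂ) = 0 := by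
    have : stT μa (Eα : ℂ) = ((stTR μa Eα : ℝ) : ℂ) := by
      rw [stT, stTR, ← integral_complex_ofReal]
      push_cast
      rfl
    rw [this, hEα₂, Complex.ofReal_zero]
  have hn : ∀ z ∈ UHP, nrT μa z - z = stT μhata z := fun z hz => by
    rw [hhata.2 z hz, hμa.centered, stT]
    simp
  have hpI := aux_p μa μhata Eα _ hEα₁ hdR h0 hn
  have hp : 0 < (μhata {Eα}).toReal := ENNReal.toReal_pos hEα₃ (measure_ne_top _ _)
  have hkey := fun (z : ℂ) (hz : z.im = 0) (h : Ωb z = ((Eα : ℂ) : OnePoint ℂ)) =>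
    aux_key_limit μa μb ωa ωb hsub Eα _ R _ hEα₁ hR hdC h0 hpI hsupp hc z
      (aux_lim_of_ext ωb Ωb hΩb z Eα hz h)
  refine ⟨?_, ?_, ?_⟩
  · rintro hgt ⟨z, hz, hΩ⟩
    have := aux_nebot z hz
    have h1 := ge_of_tendsto (b := 0) (hkey z hz hΩ) (by
      filter_upwards [self_mem_nhdsWithin] with w hw
      exact div_nonneg (le_of_lt hw) (aux_m_ne μa _ (hsub.maps_b w hw)).le)
    linarith
  · intro hlt
    have hfix := aux_fix μa μb μhata hx2 hx1 hc hn ωa ωb hsub Ωb hΩb Eα hp hlt.le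
    refine ⟨⟨Eα, by simp, hfix⟩, ?_⟩
    have hev := (hkey Eα (by simp) hfix).eventually_const_lt (half_lt_self (sub_pos.2 hlt))
    rw [eventually_nhdsWithin_iff, Metric.eventually_nhds_iff] at hev
    obtain ⟨ε, hε, hev⟩ := hev
    refine aux_not_supp μab Eα (ε / 2)
      (((μhata {Eα}).toReal - ∫ x, x ^ 2 ∂μb) / 2)⁻¹ (half_pos hε) ?_
    intro x η hx hη hηε
    have hw : (x + η * Complex.I : ℂ) ∈ UHP := by simpa [UHP] using hη
    have hdist : dist (x + η * Complex.I : ℂ) (Eα : ℂ) < ε := by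
      rw [dist_eq_norm]
      have h1 : (x + η * Complex.I : ℂ) - Eα = ((x - Eα : ℝ) : ℂ) + η * Complex.I := by
        push_cast
        ring
      rw [h1]
      refine (norm_add_le _ _).trans_lt ?_
      rw [Complex.norm_real, norm_mul, Complex.norm_I, Complex.norm_real, mul_one,
        Real.norm_eq_abs, Real.norm_eq_abs, abs_of_pos hη]
      linarith
    have h2 := hev hdist hw
    have hM := aux_m_ne μab _ hw
    have him := aux_im μab _ hw
    rw [← hconv.2 _ hw] at h2
    have hwim : (x + η * Complex.I : ℂ).im = η := by simp
    rw [hwim] at h2 him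
    have hI : 0 < Ifun μab (x + η * Complex.I) :=
      aux_I_pos μab _ _ hw (aux_uhp_ae μab _ hw)
    have e : η / (stT μab (x + η * Complex.I)).im = (Ifun μab (x + η * Complex.I))⁻¹ := by
      rw [him]
      field_simp
    rw [e] at h2
    rw [le_inv_comm₀ hI (by linarith)]
    exact h2.le
  · intro heq
    exact ⟨Eα, by simp, aux_fix μa μb μhata hx2 hx1 hc hn ωa ωb hsub Ωb hΩb Eα hp heq.le⟩
end
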